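/- For any translation-invariant Gibbs measure μ for the 1-2 model on the hexagonal lattice ℍ (with any weights a, b, c > 0), μ-almost every 1-2 model configuration ω ∈ Ω has at most one infinite {001}-cluster. -/

import Mathlib

open MeasureTheory

/-- Vertices of the hexagonal lattice: `(x, y, t)` with `t = true` the "upper" vertex. -/
abbrev HexV : Type := ℤ × ℤ × Bool

/-- Edges of the hexagonal lattice: `(x, y, k)` with `k = 0` the a-type (horizontal) edge
joining `(x,y,1)` to `(x,y,0)`, `k = 1` the b-type edge joining `(x,y,1)` to `(x+1,y,0)`,
`k = 2` the c-type edge joining `(x,y,1)` to `(x,y+1,0)`. -/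
abbrev HexE : Type := ℤ × ℤ × Fin 3

/-- A configuration assigns present/absent to each edge. -/
abbrev Config : Type := HexE → Bool

def end1 (e : HexE) : HexV := (e.1, e.2.1, true)

def end2 (e : HexE) : HexV :=
  if e.2.2 = 0 then (e.1, e.2.1, false)
  else if e.2.2 = 1 then (e.1 + 1, e.2.1, false)
  else (e.1, e.2.1 + 1, false)

/-- The edges incident to a vertex, indexed so that index `0` is the a-type (horizontal)
edge, index `1` the b-type edge, index `2` the c-type edge. -/
def edgesAt (v : HexV) : Fin 3 → HexE := fun i =>
  if v.2.2 then (v.1, v.2.1, i)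
  else if i = 0 then (v.1, v.2.1, 0)
  else if i = 1 then (v.1 - 1, v.2.1, 1)
  else (v.1, v.2.1 - 1, 2)

/-- Local configuration of `ω` at `v`: digit `0` (rightmost) is the a-type edge,
digit `1` the b-type edge, digit `2` (leftmost) the c-type edge. -/
def localConf (ω : Config) (v : HexV) : Fin 3 → Bool := fun i => ω (edgesAt v i)

/-- A 1-2 model configuration: every vertex is incident to one or two present edges. -/
def IsConfig (ω : Config) : Prop :=
  ∀ v : HexV,
    1 ≤ (Finset.univ.filter fun i : Fin 3 => localConf ω v i = true).card ∧
    (Finset.univ.filter fun i : Fin 3 => localConf ω v i = true).card ≤ 2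

/-- The local configuration type `{001}` : only the a-type (horizontal) edge is present. -/
def conf001 : Fin 3 → Bool := ![true, false, false]

/-- The six admissible local configuration types `{001},…,{110}`. -/
def validConf (τ : Fin 3 → Bool) : Prop :=
  τ ≠ ![false, false, false] ∧ τ ≠ ![true, true, true]

/-- Vertex weight: `w(001)=w(110)=a`, `w(010)=w(101)=b`, `w(011)=w(100)=c`. -/
def weight (a b c : ℝ) (f : Fin 3 → Bool) : ℝ :=
  match f 2, f 1, f 0 with
  | false, false, true  => a
  | true,  true,  false => a
  | false, true,  false => b
  | true,  false, true  => b
  | false, true,  true  => c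
  | true,  false, false => c
  | false, false, false => 0
  | true,  true,  true  => 0

/-- Adjacency in the hexagonal lattice. -/
def HexAdj (v w : HexV) : Prop :=
  v ≠ w ∧ ∃ e : HexE, (v = end1 e ∨ v = end2 e) ∧ (w = end1 e ∨ w = end2 e)

/-- Adjacency restricted to a vertex set `S`. -/
def adjIn (S : Set HexV) (v w : HexV) : Prop := HexAdj v w ∧ v ∈ S ∧ w ∈ S

/-- The connected component of `v` in the subgraph induced on `S`. -/
def compOf (S : Set HexV) (v : HexV) : Set HexV := {w | Relation.ReflTransGen (adjIn S) v w}

/-- `C` is a connected component of the subgraph induced on `S`. -/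
def IsCompOf (S : Set HexV) (C : Set HexV) : Prop := ∃ v ∈ S, C = compOf S v

/-- Vertices whose local configuration equals `τ`. -/
def confSet (ω : Config) (τ : Fin 3 → Bool) : Set HexV := {v | localConf ω v = τ}

/-- A `τ`-cluster of `ω`. -/
def IsCluster (ω : Config) (τ : Fin 3 → Bool) (C : Set HexV) : Prop :=
  IsCompOf (confSet ω τ) C

/-- The number of infinite `τ`-clusters of `ω`, as an extended natural number. -/
noncomputable def numInfClusters (ω : Config) (τ : Fin 3 → Bool) : ℕ∞ :=
  {C : Set HexV | IsCluster ω τ C ∧ C.Infinite}.encard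

def endsFinset (e : HexE) : Finset HexV := {end1 e, end2 e}

/-- Vertices incident to an edge of `F`. -/
def verts (F : Finset HexE) : Finset HexV := F.biUnion endsFinset

/-- Edges sharing an endpoint with an edge of `F`. -/
def edgeNbhd (F : Finset HexE) : Set HexE :=
  {e' | ∃ e ∈ F,
    end1 e = end1 e' ∨ end1 e = end2 e' ∨ end2 e = end1 e' ∨ end2 e = end2 e'}

/-- Cylinder event: configurations agreeing with `σ` on `S`. -/
def cyl (S : Set HexE) (σ : Config) : Set Config := {ω | ∀ e ∈ S, ω e = σ e}

/-- A Gibbs measure for the 1-2 model with weights `a`, `b`, `c`. -/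
def IsGibbs (a b c : ℝ) (μ : Measure Config) : Prop :=
  IsProbabilityMeasure μ ∧ μ {ω | IsConfig ω} = 1 ∧
  ∀ F : Finset HexE, ∀ σ τ : Config, IsConfig σ → IsConfig τ →
    (∀ e ∉ F, σ e = τ e) →
    μ (cyl (↑F ∪ edgeNbhd F) σ) *
        ENNReal.ofReal (∏ v ∈ verts F, weight a b c (localConf τ v)) =
      μ (cyl (↑F ∪ edgeNbhd F) τ) *
        ENNReal.ofReal (∏ v ∈ verts F, weight a b c (localConf σ v))

/-- Translation of edges by `g ∈ ℤ²`. -/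
def shiftE (g : ℤ × ℤ) (e : HexE) : HexE := (e.1 + g.1, e.2.1 + g.2, e.2.2)

/-- Induced translation action on configurations. -/
def shiftConfig (g : ℤ × ℤ) (ω : Config) : Config := fun e => ω (shiftE g e)

/-- Translation invariance of a measure on configurations. -/
def TransInvariant (μ : Measure Config) : Prop :=
  ∀ g : ℤ × ℤ, μ.map (shiftConfig g) = μ

/-- Ergodicity: every translation-invariant measurable event has measure `0` or `1`. -/
def IsErgodicTI (μ : Measure Config) : Prop :=
  ∀ A : Set Config, MeasurableSet A → (∀ g, shiftConfig g ⁻¹' A = A) → μ A = 0 ∨ μ A = 1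

/-- The box `B_n(i,j)`. -/
def box (n : ℕ) (i j : ℤ) : Set HexV :=
  {v | |v.1 - i| ≤ (n : ℤ) ∧ |v.2.1 - j| ≤ (n : ℤ)}

/-- Vertices outside `B` adjacent to a vertex of `B`. -/
def outerBoundary (B : Set HexV) : Set HexV := {v | v ∉ B ∧ ∃ w ∈ B, HexAdj v w}

/-- `B_N(i,j)` is an encounter box for `ω` with respect to the infinite `{001}`-cluster `C`. -/
def IsEncounterBoxWrt (ω : Config) (N : ℕ) (i j : ℤ) (C : Set HexV) : Prop :=
  IsCluster ω conf001 C ∧ C.Infinite ∧ box N i j ⊆ C ∧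
  (∀ D, IsCompOf (C \ box (N + 2) i j) D → D.Infinite) ∧
  {D : Set HexV | IsCompOf (C \ box (N + 2) i j) D ∧ D.Infinite}.encard = 3

/-- `B_N(i,j)` is an encounter box for `ω`. -/
def IsEncounterBox (ω : Config) (N : ℕ) (i j : ℤ) : Prop :=
  ∃ C : Set HexV, IsEncounterBoxWrt ω N i j C

/-- A 3-partition of `Y`: an unordered triple of pairwise disjoint nonempty sets with union `Y`. -/
def IsThreePartition {α : Type*} (Y : Set α) (P : Set (Set α)) : Prop :=
  ∃ P₁ P₂ P₃ : Set α, P = {P₁, P₂, P₃} ∧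
    P₁.Nonempty ∧ P₂.Nonempty ∧ P₃.Nonempty ∧
    Disjoint P₁ P₂ ∧ Disjoint P₁ P₃ ∧ Disjoint P₂ P₃ ∧
    P₁ ∪ P₂ ∪ P₃ = Y

/-- Two 3-partitions are compatible if their parts can be ordered so that `Q₂ ∪ Q₃ ⊆ P₁`. -/
def CompatiblePartitions {α : Type*} (P Q : Set (Set α)) : Prop :=
  ∃ P₁ ∈ P, ∃ Q₁ ∈ Q, ∀ R ∈ Q, R ≠ Q₁ → R ⊆ P₁

/-!
The argument is that of Burton and Keane. A bounded set whose removal splits an infinite cluster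
into at least three infinite pieces is a trifurcation. Disjoint trifurcations inside a large box are
at most as many as the points of the outer boundary of the box, whereas stationarity would make
their mean number proportional to the volume of the box if they had positive probability. So
trifurcations do not occur.

If there are several infinite `{001}`-clusters, Poincaré recurrence provides arbitrarily large
rectangles with a `{001}`-vertex in the two opposite corners that could otherwise become incident to
three present edges; so one may replace the configuration inside the rectangle by its horizontal
edges and obtain a 1-2 model configuration, in which the clusters meeting the rectangle are joined.
By the Gibbs property this surgery is absolutely continuous. Applied to three infinite
clusters it creates a trifurcation. Applied to exactly two it leaves a single infinite cluster,
which is impossible because a translation-invariant event is a limit of events not depending on the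
edges of the rectangle, and hence is almost surely preserved by the surgery.
-/

/-! ### Components of the subgraph induced on a set -/

section ReachableIn

variable {V V' : Type*} {G : SimpleGraph V} {G' : SimpleGraph V'} {S T K : Set V} {u v w : V}

/-- `u` and `v` are joined by a path of `G` inside `S`. The induced subgraph is spread over all of
`V`, so that `S` may vary without coercions; a vertex outside `S` is reachable from itself only. -/
def ReachableIn (G : SimpleGraph V) (S : Set V) (u v : V) : Prop :=
  (G.induce S).spanningCoe.Reachable u v

/-- The connected component of `v` in the subgraph of `G` induced on `S`; this is `{v}` when
`v ∉ S`. -/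
def componentIn (G : SimpleGraph V) (S : Set V) (v : V) : Set V := {w | ReachableIn G S v w}

lemma reachableIn_iff_reflTransGen :
    ReachableIn G S u v ↔ Relation.ReflTransGen (fun a b ↦ G.Adj a b ∧ a ∈ S ∧ b ∈ S) u v := by
  have hadj : (G.induce S).spanningCoe.Adj = fun a b ↦ G.Adj a b ∧ a ∈ S ∧ b ∈ S := by
    ext a b
    simp only [SimpleGraph.map_adj, SimpleGraph.comap_adj, Function.Embedding.subtype_apply,
      Subtype.exists, exists_and_left, exists_prop]
    grind
  rw [ReachableIn, SimpleGraph.reachable_iff_reflTransGen, hadj]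

namespace ReachableIn

lemma refl (v : V) : ReachableIn G S v v := SimpleGraph.Reachable.refl v

lemma symm (h : ReachableIn G S u v) : ReachableIn G S v u := SimpleGraph.Reachable.symm h

lemma trans (h : ReachableIn G S u v) (h' : ReachableIn G S v w) : ReachableIn G S u w :=
  SimpleGraph.Reachable.trans h h'

lemma of_adj (h : G.Adj u v) (hu : u ∈ S) (hv : v ∈ S) : ReachableIn G S u v :=
  reachableIn_iff_reflTransGen.2 (.single ⟨h, hu, hv⟩)

lemma map (f : G →g G') {T : Set V'} (hf : Set.MapsTo f S T) (h : ReachableIn G S u v) :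
    ReachableIn G' T (f u) (f v) := by
  rw [reachableIn_iff_reflTransGen] at h ⊢
  exact h.lift f fun a b hab ↦ ⟨f.map_adj hab.1, hf hab.2.1, hf hab.2.2⟩

lemma mono (hST : S ⊆ T) (h : ReachableIn G S u v) : ReachableIn G T u v :=
  h.map SimpleGraph.Hom.id hST

lemma mem_of_closed {C : Set V} (hC : ∀ a ∈ C, ∀ b ∈ S, G.Adj a b → b ∈ C) (hu : u ∈ C)
    (h : ReachableIn G S u v) : v ∈ C := by
  rw [reachableIn_iff_reflTransGen] at h
  induction h with
  | refl => exact hu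
  | tail _ hab ih => exact hC _ ih _ hab.2.2 hab.1

lemma mem (h : ReachableIn G S u v) (hu : u ∈ S) : v ∈ S :=
  h.mem_of_closed (fun _ _ _ hb _ ↦ hb) hu

lemma of_componentIn_subset (hT : componentIn G S u ⊆ T) (h : ReachableIn G S u v) :
    ReachableIn G T u v := by
  have h' := reachableIn_iff_reflTransGen.1 h
  clear h
  induction h' with
  | refl => exact refl u
  | @tail a b hua hab ih =>
    have ha : ReachableIn G S u a := reachableIn_iff_reflTransGen.2 hua
    exact ih.trans (of_adj hab.1 (hT ha) (hT (ha.trans (of_adj hab.1 hab.2.1 hab.2.2))))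

lemma exists_last_exit (hu : u ∈ K) (hv : v ∉ K) (h : ReachableIn G S u v) :
    ∃ k ∈ K, ∃ p ∈ S \ K, G.Adj k p ∧ ReachableIn G S u p ∧ ReachableIn G (S \ K) p v := by
  have h' := reachableIn_iff_reflTransGen.1 h
  clear h
  induction h' with
  | refl => exact absurd hu hv
  | @tail a b hua hab ih =>
    by_cases ha : a ∈ K
    · have hub := (reachableIn_iff_reflTransGen.2 hua).trans (of_adj hab.1 hab.2.1 hab.2.2)
      exact ⟨a, ha, b, ⟨hab.2.2, hv⟩, hab.1, hub, refl b⟩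
    · obtain ⟨k, hk, p, hp, hkp, hup, hpa⟩ := ih ha
      exact ⟨k, hk, p, hp, hkp, hup, hpa.trans (of_adj hab.1 ⟨hab.2.1, ha⟩ ⟨hab.2.2, hv⟩)⟩

-- A path that leaves `S` has to step back to the vertex it came from.
lemma of_pendant (hST : S ⊆ T)
    (hpend : ∀ t ∈ T \ S, ∀ a ∈ T, ∀ b ∈ T, G.Adj t a → G.Adj t b → a = b)
    (hu : u ∈ S) (hv : v ∈ S) (h : ReachableIn G T u v) : ReachableIn G S u v := by
  let C : Set V :=
    {x | ∃ y, ReachableIn G S u y ∧ (x = y ∨ x ∉ S ∧ x ∈ T ∧ G.Adj x y)}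
  have hmem : v ∈ C := by
    refine h.mem_of_closed (fun a ⟨y, huy, hay⟩ b hb hab ↦ ?_) ⟨u, refl u, .inl rfl⟩
    have hy : y ∈ S := huy.mem hu
    rcases hay with rfl | ⟨haS, haT, hay⟩
    · by_cases hbS : b ∈ S
      · exact ⟨b, huy.trans (of_adj hab hy hbS), .inl rfl⟩
      · exact ⟨a, huy, .inr ⟨hbS, hb, hab.symm⟩⟩
    · exact ⟨y, huy, .inl (hpend a ⟨haT, haS⟩ b hb y (hST hy) hab hay)⟩
  obtain ⟨y, huy, rfl | ⟨hvS, -⟩⟩ := hmem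
  · exact huy
  · exact absurd hv hvS

end ReachableIn

lemma reachableIn_preimage_iff (f : G ≃g G') {S : Set V'} :
    ReachableIn G (f ⁻¹' S) u v ↔ ReachableIn G' S (f u) (f v) := by
  refine ⟨.map f.toHom (Set.mapsTo_preimage f S), fun h ↦ ?_⟩
  simpa using h.map (T := f ⁻¹' S) f.symm.toHom fun x hx ↦ by simpa using hx

lemma componentIn_preimage (f : G ≃g G') (S : Set V') (v : V) :
    componentIn G (f ⁻¹' S) v = f ⁻¹' componentIn G' S (f v) :=
  Set.ext fun _ ↦ reachableIn_preimage_iff f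

lemma infinite_componentIn_preimage_iff (f : G ≃g G') {S : Set V'} :
    (componentIn G (f ⁻¹' S) v).Infinite ↔ (componentIn G' S (f v)).Infinite := by
  rw [componentIn_preimage]
  exact not_congr ⟨fun h ↦ .of_preimage h f.surjective, .preimage f.injective.injOn⟩

lemma mem_of_infinite_componentIn (h : (componentIn G S v).Infinite) : v ∈ S := by
  by_contra hv
  refine h ((Set.finite_singleton v).subset fun w hw ↦ ?_)
  rcases (reachableIn_iff_reflTransGen.1 hw).cases_head with rfl | ⟨_, hvx, _⟩
  · rfl
  · exact absurd hvx.2.1 hv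

lemma infinite_componentIn_mono (hST : S ⊆ T) (h : (componentIn G S v).Infinite) :
    (componentIn G T v).Infinite :=
  h.mono fun _ hw ↦ ReachableIn.mono hST hw

lemma exists_infinite_branch [G.LocallyFinite] (hK : K.Finite) (hv : v ∈ K)
    (hinf : (componentIn G S v).Infinite) :
    ∃ p, (∃ k ∈ K, G.Adj k p) ∧ ReachableIn G S v p ∧ (componentIn G (S \ K) p).Infinite := by
  by_contra! hfin
  let N : Set V := {p | (∃ k ∈ K, G.Adj k p) ∧ ReachableIn G S v p}
  have hN : N.Finite := (hK.biUnion fun k _ ↦ (G.neighborSet k).toFinite).subset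
    fun p ⟨⟨k, hk, hkp⟩, _⟩ ↦ Set.mem_biUnion hk hkp
  refine hinf ((hK.union (hN.biUnion fun p hp ↦ hfin p hp.1 hp.2)).subset
    fun w hw ↦ ?_)
  by_cases hwK : w ∈ K
  · exact .inl hwK
  · obtain ⟨k, hk, p, -, hkp, hvp, hpw⟩ := ReachableIn.exists_last_exit hv hwK hw
    exact .inr (Set.mem_biUnion (show p ∈ N from ⟨⟨k, hk, hkp⟩, hvp⟩) hpw)

/-- The subgraph of `G` induced on `S` has at least `n` infinite connected components: they are
the components of the `n` listed vertices. -/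
def HasInfiniteComponents (G : SimpleGraph V) (S : Set V) (n : ℕ) : Prop :=
  ∃ v : Fin n → V, (∀ i, (componentIn G S (v i)).Infinite) ∧
    Pairwise fun i j ↦ ¬ ReachableIn G S (v i) (v j)

lemma hasInfiniteComponents_preimage_iff (f : G ≃g G') {S : Set V'} {n : ℕ} :
    HasInfiniteComponents G (f ⁻¹' S) n ↔ HasInfiniteComponents G' S n := by
  simp only [HasInfiniteComponents, reachableIn_preimage_iff, infinite_componentIn_preimage_iff]
  exact ⟨fun ⟨v, hv⟩ ↦ ⟨f ∘ v, hv⟩, fun ⟨v, hv⟩ ↦ ⟨f.symm ∘ v, by simpa using hv⟩⟩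

lemma exists_reachableIn_of_not_hasInfiniteComponents {n : ℕ} {v : Fin n → V} {p : V}
    (hmax : ¬ HasInfiniteComponents G S (n + 1)) (hinf : ∀ i, (componentIn G S (v i)).Infinite)
    (hsep : Pairwise fun i j ↦ ¬ ReachableIn G S (v i) (v j))
    (hp : (componentIn G S p).Infinite) : ∃ i, ReachableIn G S (v i) p := by
  by_contra! hnot
  refine hmax ⟨Fin.cons p v, Fin.cases hp hinf, fun i j hij ↦ ?_⟩
  cases i using Fin.cases <;> cases j using Fin.cases
  · exact absurd rfl hij
  · exact fun h ↦ hnot _ h.symm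
  · exact hnot _
  · exact hsep (ne_of_apply_ne Fin.succ hij)

end ReachableIn

/-! ### Trifurcations and the Burton–Keane count -/

section NestedBranches

variable {ι α : Type*} {branch : Fin 3 → Set α} {Y : Finset α}

lemma exists_ne_branch_ne (hdisj : Pairwise (Function.onFun Disjoint branch))
    (hmeet : ∀ a, (branch a ∩ Y).Nonempty) (a : Fin 3) (B : Set α) :
    ∃ c, c ≠ a ∧ branch c ≠ B := by
  by_contra! h
  have hthree : ∀ a : Fin 3, ∃ c d, c ≠ a ∧ d ≠ a ∧ c ≠ d := by decide
  obtain ⟨c, d, hca, hda, hcd⟩ := hthree a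
  obtain ⟨y, hy, -⟩ := hmeet c
  exact (hdisj hcd).ne_of_mem hy (by rwa [h d hda, ← h c hca]) rfl

lemma exists_ncard_branch_inter_lt (hdisj : Pairwise (Function.onFun Disjoint branch))
    (hmeet : ∀ a, (branch a ∩ Y).Nonempty) {A B : Set α} (hsub : ∀ a, branch a ≠ B → branch a ⊆ A) :
    ∃ a, (branch a ∩ Y).ncard < (A ∩ Y).ncard := by
  obtain ⟨c, -, hc⟩ := exists_ne_branch_ne hdisj hmeet 0 B
  obtain ⟨d, hdc, hd⟩ := exists_ne_branch_ne hdisj hmeet c B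
  obtain ⟨y, hyd, hyY⟩ := hmeet d
  refine ⟨c, Set.ncard_lt_ncard ⟨Set.inter_subset_inter_left _ (hsub c hc), fun hsup ↦ ?_⟩
    (Y.finite_toSet.subset Set.inter_subset_right)⟩
  exact (hdisj hdc).ne_of_mem hyd (hsup ⟨hsub d hd hyd, hyY⟩).1 rfl

-- In the application `side i j` is the component containing `j` after the removal of `i`.
theorem card_le_card_of_nested_branches (s : Finset ι) (Y : Finset α) {branch : ι → Fin 3 → Set α}
    {side : ι → ι → Set α} (hdisj : ∀ i ∈ s, Pairwise (Function.onFun Disjoint (branch i)))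
    (hmeet : ∀ i ∈ s, ∀ a, (branch i a ∩ Y).Nonempty)
    (hnest : ∀ i ∈ s, ∀ j ∈ s, i ≠ j → ∀ a, branch i a ≠ side i j →
      Disjoint (branch i a) (side i j) ∧ branch i a ⊆ side j i) :
    s.card ≤ Y.card := by
  classical
  induction s using Finset.strongInduction generalizing Y with
  | H s ih =>
  rcases s.eq_empty_or_nonempty with rfl | hs
  · simp
  -- A branch with the fewest points of `Y` is not of the form `side i j`, as it would contain two
  -- disjoint branches of `j`. So `i` and the points of this branch can be removed.
  obtain ⟨⟨i, a⟩, hia, hmin⟩ := (s ×ˢ (Finset.univ : Finset (Fin 3))).exists_min_image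
    (fun p ↦ (branch p.1 p.2 ∩ Y).ncard) (hs.product Finset.univ_nonempty)
  have hi : i ∈ s := (Finset.mem_product.1 hia).1
  have hside : ∀ j ∈ s, i ≠ j → branch i a ≠ side i j := fun j hj hij heq ↦ by
    obtain ⟨b, hb⟩ := exists_ncard_branch_inter_lt (hdisj j hj) (hmeet j hj)
      (fun b hb ↦ (hnest j hj i hi hij.symm b hb).2)
    exact (hmin (j, b) (by simp [hj])).not_gt (by rwa [← heq] at hb)
  have hrest : (s.erase i).card ≤ {y ∈ Y | y ∉ branch i a}.card := by
    refine ih _ (Finset.erase_ssubset hi) _ (fun j hj ↦ hdisj j (Finset.mem_of_mem_erase hj))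
      (fun j hj b ↦ ?_) fun j hj k hk ↦ hnest j (Finset.mem_of_mem_erase hj) k
        (Finset.mem_of_mem_erase hk)
    obtain ⟨hji, hj⟩ := Finset.mem_erase.1 hj
    have hnest_a := hnest i hi j hj hji.symm a (hside j hj hji.symm)
    suffices ∃ D, D ⊆ branch j b ∧ Disjoint D (branch i a) ∧ (D ∩ Y).Nonempty by
      obtain ⟨D, hDb, hDa, y, hyD, hyY⟩ := this
      exact ⟨y, hDb hyD, by simpa using ⟨hyY, hDa.notMem_of_mem_left hyD⟩⟩
    by_cases hb : branch j b = side j i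
    · obtain ⟨c, hca, hc⟩ := exists_ne_branch_ne (hdisj i hi) (hmeet i hi) a (side i j)
      exact ⟨branch i c, hb ▸ (hnest i hi j hj hji.symm c hc).2, hdisj i hi hca, hmeet i hi c⟩
    · exact ⟨branch j b, subset_rfl, (hnest_a.1.mono_right (hnest j hj i hi hji b hb).2).symm,
        hmeet j hj b⟩
  obtain ⟨y, hya, hyY⟩ := hmeet i hi a
  have hlt : {y ∈ Y | y ∉ branch i a}.card < Y.card :=
    Finset.card_lt_card (Finset.filter_ssubset.2 ⟨y, hyY, not_not.2 hya⟩)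
  have := Finset.card_erase_add_one hi
  lia

end NestedBranches

section Trifurcation

variable {V V' : Type*} {G : SimpleGraph V} {G' : SimpleGraph V'} {S K L : Set V}

/-- `K` is a connected subset of `S` whose removal leaves three distinct infinite components
attached to `K`. -/
def IsTrifurcation (G : SimpleGraph V) (S K : Set V) : Prop :=
  K ⊆ S ∧ (∀ u ∈ K, ∀ v ∈ K, ReachableIn G K u v) ∧ ∃ z : Fin 3 → V,
    (∀ a, (∃ k ∈ K, G.Adj k (z a)) ∧ (componentIn G (S \ K) (z a)).Infinite) ∧
    Pairwise fun a b ↦ ¬ ReachableIn G (S \ K) (z a) (z b)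

lemma isTrifurcation_preimage_iff (f : G ≃g G') {S K : Set V'} :
    IsTrifurcation G (f ⁻¹' S) (f ⁻¹' K) ↔ IsTrifurcation G' S K := by
  simp only [IsTrifurcation, ← Set.preimage_sdiff, reachableIn_preimage_iff,
    infinite_componentIn_preimage_iff, Set.mem_preimage, f.surjective.preimage_subset_preimage_iff]
  refine and_congr_right fun _ ↦ and_congr (by simp [f.surjective.forall]) ⟨?_, ?_⟩
  · rintro ⟨z, hz, hsep⟩
    exact ⟨f ∘ z, fun a ↦ ⟨(hz a).1.imp' f fun k hk ↦ ⟨hk.1, f.map_adj_iff.2 hk.2⟩, (hz a).2⟩, hsep⟩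
  · rintro ⟨z, hz, hsep⟩
    refine ⟨f.symm ∘ z, fun a ↦ ⟨?_, by simpa using (hz a).2⟩, by simpa using hsep⟩
    obtain ⟨k, hk, hkz⟩ := (hz a).1
    exact ⟨f.symm k, by simpa using hk, f.symm.map_adj_iff.2 hkz⟩

lemma componentIn_eq_or_disjoint (S : Set V) (u v : V) :
    componentIn G S u = componentIn G S v ∨ Disjoint (componentIn G S u) (componentIn G S v) := by
  refine or_iff_not_imp_right.2 fun h ↦ ?_
  obtain ⟨w, huw, hvw⟩ := Set.not_disjoint_iff.1 h
  have huv : ReachableIn G S u v := huw.trans hvw.symm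
  exact Set.ext fun w ↦ ⟨huv.symm.trans, huv.trans⟩

lemma componentIn_subset_of_ne {K' : Set V} (hKS : K ⊆ S)
    (hK : ∀ u ∈ K, ∀ v ∈ K, ReachableIn G K u v) (hK'S : K' ⊆ S)
    (hK' : ∀ u ∈ K', ∀ v ∈ K', ReachableIn G K' u v) (hKK' : Disjoint K K') {k k' p q : V}
    (hk : k ∈ K) (hk' : k' ∈ K') (hq : q ∈ K) (hqp : G.Adj q p) (hp : p ∈ S \ K)
    (hne : componentIn G (S \ K) p ≠ componentIn G (S \ K) k') :
    componentIn G (S \ K) p ⊆ componentIn G (S \ K') k := by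
  have hcomp : componentIn G (S \ K) p ⊆ S \ K' := fun w hw ↦ by
    have hwS := ReachableIn.mem hw hp
    refine ⟨hwS.1, fun hwK' ↦ hne ?_⟩
    have hk'w := (hK' k' hk' w hwK').mono (Set.subset_sdiff.2 ⟨hK'S, hKK'.symm⟩)
    exact (componentIn_eq_or_disjoint _ _ _).resolve_right
      (Set.not_disjoint_iff.2 ⟨w, hw, hk'w⟩)
  have hKsub : K ⊆ S \ K' := Set.subset_sdiff.2 ⟨hKS, hKK'⟩
  have hkp : ReachableIn G (S \ K') k p :=
    ((hK k hk q hq).mono hKsub).trans (.of_adj hqp (hKsub hq) (hcomp (.refl p)))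
  exact fun w hw ↦ hkp.trans (ReachableIn.of_componentIn_subset hcomp hw)

lemma exists_mem_componentIn_of_boundary {Y : Set V} (hL : L.Finite)
    (hY : ∀ u ∈ L, ∀ w ∉ L, G.Adj u w → w ∈ Y) {k p : V} (hk : k ∈ L) (hkp : G.Adj k p)
    (hinf : (componentIn G S p).Infinite) : (componentIn G S p ∩ Y).Nonempty := by
  by_contra hempty
  have hnot : ∀ w, ReachableIn G S p w → w ∉ Y := fun w hw hwY ↦ hempty ⟨w, hw, hwY⟩
  have hpL : p ∈ L := by_contra fun hpL ↦ hnot p (.refl p) (hY k hk p hpL hkp)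
  have hpS := mem_of_infinite_componentIn hinf
  refine hinf (hL.subset fun w hw ↦ (ReachableIn.mem_of_closed
    (C := L ∩ componentIn G S p) (fun a ⟨haL, hpa⟩ b hb hab ↦ ?_) ⟨hpL, .refl p⟩ hw).1)
  have hpb : ReachableIn G S p b := hpa.trans (.of_adj hab (hpa.mem hpS) hb)
  exact ⟨by_contra fun hbL ↦ hnot b hpb (hY a haL b hbL hab), hpb⟩

theorem card_le_card_of_isTrifurcation {ι : Type*} [Fintype ι] {K : ι → Set V} {Y : Finset V}
    (hK : ∀ i, IsTrifurcation G S (K i)) (hdisj : Pairwise (Function.onFun Disjoint K))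
    (hL : L.Finite) (hKL : ∀ i, K i ⊆ L) (hY : ∀ u ∈ L, ∀ w ∉ L, G.Adj u w → w ∈ Y) :
    Fintype.card ι ≤ Y.card := by
  choose hKS hconn z hz hsep using hK
  choose hadj hinf using hz
  choose q hq hqz using hadj
  refine card_le_card_of_nested_branches Finset.univ Y
    (branch := fun i a ↦ componentIn G (S \ K i) (z i a))
    (side := fun i j ↦ componentIn G (S \ K i) (q j 0)) (fun i _ a b hab ↦ ?_) (fun i _ a ↦ ?_)
    fun i _ j _ hij a hne ↦ ⟨(componentIn_eq_or_disjoint _ _ _).resolve_left hne, ?_⟩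
  · refine (componentIn_eq_or_disjoint _ _ _).resolve_left fun heq ↦ hsep i hab ?_
    exact heq.superset (.refl (z i b))
  · exact exists_mem_componentIn_of_boundary hL hY (hKL i (hq i a)) (hqz i a) (hinf i a)
  · exact componentIn_subset_of_ne (hKS i) (hconn i) (hKS j) (hconn j) (hdisj hij) (hq i 0) (hq j 0)
      (hq i a) (hqz i a) (mem_of_infinite_componentIn (hinf i a)) hne

end Trifurcation

/-! ### Measurability of connectivity events -/

section Measurability

variable {Ω α V : Type*} [MeasurableSpace Ω]

lemma measurable_isChain {r : Ω → α → α → Prop} (hr : ∀ a b, Measurable fun ω ↦ r ω a b)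
    (l : List α) : Measurable fun ω ↦ List.IsChain (r ω) l := by
  induction l using List.twoStepInduction with
  | nil => simp
  | singleton a => simp
  | cons_cons a b l _ ih =>
    simp only [List.isChain_cons_cons]
    exact (hr a b).and (ih b)

lemma measurable_reflTransGen [Countable α] {r : Ω → α → α → Prop}
    (hr : ∀ a b, Measurable fun ω ↦ r ω a b) (a b : α) :
    Measurable fun ω ↦ Relation.ReflTransGen (r ω) a b := by
  have hchain (ω : Ω) : Relation.ReflTransGen (r ω) a b ↔
      ∃ l : List α, List.IsChain (r ω) (a :: l) ∧ (a :: l).getLast (List.cons_ne_nil a l) = b :=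
    ⟨List.exists_isChain_cons_of_relationReflTransGen,
      fun ⟨l, hl, hb⟩ ↦ List.relationReflTransGen_of_exists_isChain_cons l hl hb⟩
  simp only [hchain]
  exact .exists fun l ↦ (measurable_isChain hr _).and measurable_const

variable [Countable V] {G : SimpleGraph V} {S K : Ω → Set V}

lemma measurable_reachableIn (hS : ∀ v, Measurable fun ω ↦ v ∈ S ω) (u v : V) :
    Measurable fun ω ↦ ReachableIn G (S ω) u v := by
  simp only [reachableIn_iff_reflTransGen]
  exact measurable_reflTransGen (fun a b ↦ measurable_const.and ((hS a).and (hS b))) u v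

lemma measurable_infinite_of_measurable_mem (hS : ∀ v, Measurable fun ω ↦ v ∈ S ω) :
    Measurable fun ω ↦ (S ω).Infinite := by
  have hinf (ω : Ω) : (S ω).Infinite ↔ ∀ F : Finset V, ∃ v, v ∈ S ω ∧ v ∉ F :=
    ⟨fun h F ↦ h.exists_notMem_finset F, fun h hfin ↦ by
      obtain ⟨v, hv, hvF⟩ := h hfin.toFinset
      exact hvF (hfin.mem_toFinset.2 hv)⟩
  simp only [hinf]
  exact .forall fun F ↦ .exists fun v ↦ (hS v).and measurable_const

lemma measurable_hasInfiniteComponents (hS : ∀ v, Measurable fun ω ↦ v ∈ S ω) (n : ℕ) :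
    Measurable fun ω ↦ HasInfiniteComponents G (S ω) n := by
  simp only [HasInfiniteComponents, Pairwise]
  exact .exists fun v ↦ .and
    (.forall fun i ↦ measurable_infinite_of_measurable_mem (measurable_reachableIn hS (v i)))
    (.forall fun i ↦ .forall fun j ↦
      measurable_const.imp (measurable_reachableIn hS (v i) (v j)).not)

lemma measurable_isTrifurcation (hS : ∀ v, Measurable fun ω ↦ v ∈ S ω)
    (hK : ∀ v, Measurable fun ω ↦ v ∈ K ω) :
    Measurable fun ω ↦ IsTrifurcation G (S ω) (K ω) := by
  have hSK : ∀ v, Measurable fun ω ↦ v ∈ S ω \ K ω := fun v ↦ (hS v).and (hK v).not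
  simp only [IsTrifurcation, Set.subset_def, Pairwise]
  refine .and (.forall fun v ↦ (hK v).imp (hS v)) (.and ?_ (.exists fun z ↦ .and ?_ ?_))
  · exact .forall fun u ↦ (hK u).imp
      (.forall fun v ↦ (hK v).imp (measurable_reachableIn hK u v))
  · exact .forall fun a ↦ .and (.exists fun k ↦ (hK k).and measurable_const)
      (measurable_infinite_of_measurable_mem (measurable_reachableIn hSK (z a)))
  · exact .forall fun a ↦ .forall fun b ↦
      measurable_const.imp (measurable_reachableIn hSK (z a) (z b)).not

end Measurability

/-! ### The hexagonal lattice and its translations -/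

section HexGraph

/-- The hexagonal lattice as a simple graph. -/
def hexGraph : SimpleGraph HexV where
  Adj := HexAdj
  symm := ⟨fun _ _ h ↦ ⟨h.1.symm, h.2.imp fun _ he ↦ he.symm⟩⟩
  loopless := ⟨fun _ h ↦ h.1 rfl⟩

lemma compOf_eq_componentIn (S : Set HexV) (v : HexV) : compOf S v = componentIn hexGraph S v :=
  Set.ext fun _ ↦ (reachableIn_iff_reflTransGen (G := hexGraph)).symm

lemma hexGraph_adj_iff {x y x' y' : ℤ} {s t : Bool} : hexGraph.Adj (x, y, s) (x', y', t) ↔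
    s = true ∧ t = false ∧ (x' = x ∧ y' = y ∨ x' = x + 1 ∧ y' = y ∨ x' = x ∧ y' = y + 1) ∨
    s = false ∧ t = true ∧ (x = x' ∧ y = y' ∨ x = x' + 1 ∧ y = y' ∨ x = x' ∧ y = y' + 1) := by
  have hends (k : Fin 3) : k = 0 ∨ k = 1 ∨ k = 2 := by decide +revert
  simp only [hexGraph, HexAdj, end1, end2]
  constructor
  · rintro ⟨hne, ⟨x₀, y₀, k⟩, hv, hw⟩
    rcases hends k with rfl | rfl | rfl <;> grind
  · rintro (⟨rfl, rfl, ⟨rfl, rfl⟩ | ⟨rfl, rfl⟩ | ⟨rfl, rfl⟩⟩ |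
      ⟨rfl, rfl, ⟨rfl, rfl⟩ | ⟨rfl, rfl⟩ | ⟨rfl, rfl⟩⟩)
    · exact ⟨by simp, (x', y', 0), by simp⟩
    · exact ⟨by simp, (x, y', 1), by simp⟩
    · exact ⟨by simp, (x', y, 2), by simp⟩
    · exact ⟨by simp, (x, y, 0), by simp⟩
    · exact ⟨by simp, (x', y, 1), by simp⟩
    · exact ⟨by simp, (x, y', 2), by simp⟩

lemma abs_sub_le_one_of_hexGraph_adj {v w : HexV} (h : hexGraph.Adj v w) :
    |w.1 - v.1| ≤ 1 ∧ |w.2.1 - v.2.1| ≤ 1 := by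
  obtain ⟨x, y, s⟩ := v
  obtain ⟨x', y', t⟩ := w
  rw [hexGraph_adj_iff] at h
  simp only [abs_le]
  lia

noncomputable instance : hexGraph.LocallyFinite := fun v ↦ Set.Finite.fintype <|
  ((Set.finite_Icc (v.1 - 1) (v.1 + 1)).prod
    ((Set.finite_Icc (v.2.1 - 1) (v.2.1 + 1)).prod Set.finite_univ)).subset fun w hw ↦ by
    have := abs_sub_le_one_of_hexGraph_adj (hw : hexGraph.Adj v w)
    simp only [abs_le] at this
    simp only [Set.mem_prod, Set.mem_Icc, Set.mem_univ]
    lia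

/-- Translation of the hexagonal lattice by `g`. -/
def hexTranslate (g : ℤ × ℤ) : hexGraph ≃g hexGraph where
  toFun v := (v.1 + g.1, v.2.1 + g.2, v.2.2)
  invFun v := (v.1 - g.1, v.2.1 - g.2, v.2.2)
  left_inv v := by simp
  right_inv v := by simp
  map_rel_iff' := by
    rintro ⟨x, y, s⟩ ⟨x', y', t⟩
    simp only [Equiv.coe_fn_mk, hexGraph_adj_iff]
    lia

lemma hexTranslate_apply (g : ℤ × ℤ) (v : HexV) :
    hexTranslate g v = (v.1 + g.1, v.2.1 + g.2, v.2.2) := rfl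

lemma exists_forall_abs_le {κ : Type*} (F : Finset (ℤ × ℤ × κ)) :
    ∃ M : ℕ, ∀ v ∈ F, |v.1| ≤ M ∧ |v.2.1| ≤ M := by
  refine ⟨F.sup fun v ↦ max v.1.natAbs v.2.1.natAbs, fun v hv ↦ ?_⟩
  have := Finset.le_sup (f := fun v : ℤ × ℤ × κ ↦ max v.1.natAbs v.2.1.natAbs) hv
  simp only [abs_le]
  lia

end HexGraph

/-! ### Stationary sets have no trifurcations -/

section Stationary

/-- The vertices of the hexagonal lattice with both coordinates in `[l, r)`. -/
noncomputable def square (l r : ℤ) : Finset HexV := Finset.Ico l r ×ˢ Finset.Ico l r ×ˢ Finset.univ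

lemma mem_square {l r : ℤ} {v : HexV} :
    v ∈ square l r ↔ (l ≤ v.1 ∧ v.1 < r) ∧ l ≤ v.2.1 ∧ v.2.1 < r := by
  simp [square]

lemma card_square (l : ℤ) (n : ℕ) : (square l (l + n)).card = 2 * n ^ 2 := by
  simp only [square, Finset.card_product, Int.card_Ico, add_sub_cancel_left, Int.toNat_natCast,
    Finset.card_univ, Fintype.card_bool]
  ring

lemma card_square_sdiff_square (l : ℤ) (n : ℕ) :
    (square (l - 1) (l + n + 1) \ square l (l + n)).card = 8 * n + 8 := by
  rw [Finset.card_sdiff_of_subset fun v hv ↦ by rw [mem_square] at hv ⊢; lia, card_square,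
    show l + n + 1 = l - 1 + ((n + 2 : ℕ) : ℤ) by push_cast; ring, card_square]
  have : 2 * (n + 2) ^ 2 = 8 * n + 8 + 2 * n ^ 2 := by ring
  lia

/-- The point `p` of the square grid of mesh `W`. -/
def gridPoint (W : ℕ) (p : ℕ × ℕ) : ℤ × ℤ := (W * p.1, W * p.2)

lemma bounds_of_mem_image_square {l : ℤ} {W : ℕ} {p : ℕ × ℕ} {v : HexV}
    (hv : v ∈ hexTranslate (gridPoint W p) '' square l (l + W)) :
    (W * p.1 ≤ v.1 - l ∧ v.1 - l < W * (p.1 + 1)) ∧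
      W * p.2 ≤ v.2.1 - l ∧ v.2.1 - l < W * (p.2 + 1) := by
  obtain ⟨u, hu, rfl⟩ := hv
  have hu' := mem_square.1 hu
  simp only [hexTranslate_apply, gridPoint]
  lia

lemma disjoint_image_square (l : ℤ) (W : ℕ) {p q : ℕ × ℕ} (hpq : p ≠ q) :
    Disjoint (hexTranslate (gridPoint W p) '' square l (l + W))
      (hexTranslate (gridPoint W q) '' square l (l + W)) := by
  refine Set.disjoint_left.2 fun v hp hq ↦ hpq ?_
  have hcoord {a b : ℕ} {x : ℤ} (ha : W * a ≤ x) (hb : x < W * (b + 1)) : a ≤ b := by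
    have := lt_of_mul_lt_mul_left (ha.trans_lt hb) W.cast_nonneg
    lia
  obtain ⟨⟨p₁, p₁'⟩, p₂, p₂'⟩ := bounds_of_mem_image_square hp
  obtain ⟨⟨q₁, q₁'⟩, q₂, q₂'⟩ := bounds_of_mem_image_square hq
  exact Prod.ext ((hcoord p₁ q₁').antisymm (hcoord q₁ p₁'))
    ((hcoord p₂ q₂').antisymm (hcoord q₂ p₂'))

lemma image_square_subset_square (l : ℤ) (W : ℕ) {n : ℕ} {p : ℕ × ℕ} (h₁ : p.1 < n) (h₂ : p.2 < n) :
    hexTranslate (gridPoint W p) '' square l (l + W) ⊆ square l (l + (W * n : ℕ)) := by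
  intro v hv
  have hv' := bounds_of_mem_image_square hv
  have hlower (a : ℕ) : (0 : ℤ) ≤ W * a := by positivity
  have hupper {a : ℕ} (ha : a < n) : (W * (a + 1) : ℤ) ≤ W * n := by gcongr; lia
  have := hlower p.1
  have := hlower p.2
  have := hupper h₁
  have := hupper h₂
  rw [SetLike.mem_coe, mem_square]
  push_cast
  lia

lemma card_trifurcations_le (S : Set HexV) {R : Finset HexV} {l : ℤ} {W n : ℕ}
    (hR : R ⊆ square l (l + W)) {I : Finset (ℕ × ℕ)} (hI : I ⊆ Finset.range n ×ˢ Finset.range n)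
    (htri : ∀ p ∈ I, IsTrifurcation hexGraph (hexTranslate (gridPoint W p) ⁻¹' S)
      (R ∩ hexTranslate (gridPoint W p) ⁻¹' S)) :
    I.card ≤ 8 * (W * n) + 8 := by
  let K (p : I) : Set HexV := hexTranslate (gridPoint W p) '' R ∩ S
  have hKsub (p : I) : K p ⊆ hexTranslate (gridPoint W p) '' square l (l + W) :=
    Set.inter_subset_left.trans (Set.image_mono hR)
  have hK (p : I) : IsTrifurcation hexGraph S (K p) := by
    rw [← isTrifurcation_preimage_iff (hexTranslate (gridPoint W p)), Set.preimage_inter,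
      Set.preimage_image_eq _ (RelIso.injective _)]
    exact htri p p.2
  rw [← Fintype.card_coe, ← card_square_sdiff_square l]
  refine card_le_card_of_isTrifurcation hK
    (fun p q hpq ↦ (disjoint_image_square l W (Subtype.coe_ne_coe.2 hpq)).mono (hKsub p) (hKsub q))
    (square l (l + (W * n : ℕ))).finite_toSet (fun p ↦ (hKsub p).trans ?_) fun u hu w hw huw ↦ ?_
  · have hp := Finset.mem_product.1 (hI p.2)
    exact image_square_subset_square l W (Finset.mem_range.1 hp.1) (Finset.mem_range.1 hp.2)
  · have := abs_sub_le_one_of_hexGraph_adj huw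
    simp only [abs_le] at this
    rw [SetLike.mem_coe, mem_square] at hu
    refine Finset.mem_sdiff.2 ⟨mem_square.2 ?_, hw⟩
    lia

variable {Ω γ : Type*} [MeasurableSpace Ω] {μ : Measure Ω}

lemma card_mul_measure_le {θ : γ → Ω → Ω} (hθ : ∀ g, MeasurePreserving (θ g) μ μ) {A : Set Ω}
    (hA : MeasurableSet A) {I : Finset γ} {c : ℕ}
    (hc : ∀ ω, ∀ J ⊆ I, (∀ g ∈ J, θ g ω ∈ A) → J.card ≤ c) : I.card * μ A ≤ c * μ Set.univ := by
  classical
  calc I.card * μ A = ∑ g ∈ I, μ (θ g ⁻¹' A) := by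
        simp [(hθ _).measure_preimage hA.nullMeasurableSet]
    _ = ∫⁻ ω, ∑ g ∈ I, (θ g ⁻¹' A).indicator 1 ω ∂μ := by
        rw [lintegral_finsetSum _ fun g _ ↦ measurable_one.indicator ((hθ g).measurable hA)]
        simp [lintegral_indicator_one ((hθ _).measurable hA)]
    _ ≤ ∫⁻ _, c ∂μ := lintegral_mono fun ω ↦ by
        simpa [Set.indicator_apply] using hc ω {g ∈ I | θ g ω ∈ A} (Finset.filter_subset _ _)
          fun g hg ↦ (Finset.mem_filter.1 hg).2
    _ = c * μ Set.univ := lintegral_const _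

lemma eq_zero_of_forall_sq_mul_le {a b : ℕ} {x C : ENNReal} (hC : C ≠ ⊤)
    (h : ∀ n : ℕ, n ^ 2 * x ≤ (a * n + b) * C) : x = 0 := by
  by_contra hx
  obtain ⟨n, hn⟩ := ENNReal.exists_nat_mul_gt hx (b := (a + b) * C) (by finiteness)
  have hn0 : n ≠ 0 := by rintro rfl; simp at hn
  have hle : n * (n * x) ≤ n * ((a + b) * C) := calc
    n * (n * x) = n ^ 2 * x := by ring
    _ ≤ (a * n + b) * C := h n
    _ ≤ (a * n + n * b) * C := by
      gcongr
      exact le_mul_of_one_le_left' (by exact_mod_cast Nat.one_le_iff_ne_zero.2 hn0)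
    _ = n * ((a + b) * C) := by ring
  exact hn.not_ge ((ENNReal.mul_le_mul_iff_right (by simpa) (by simp)).1 hle)

theorem ae_not_isTrifurcation [IsFiniteMeasure μ] {θ : ℤ × ℤ → Ω → Ω}
    (hθ : ∀ g, MeasurePreserving (θ g) μ μ) {S : Ω → Set HexV}
    (hS : ∀ v, Measurable fun ω ↦ v ∈ S ω) (hSθ : ∀ g ω, S (θ g ω) = hexTranslate g ⁻¹' S ω)
    (R : Finset HexV) : ∀ᵐ ω ∂μ, ¬ IsTrifurcation hexGraph (S ω) (R ∩ S ω) := by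
  obtain ⟨M, hM⟩ := exists_forall_abs_le R
  have hR : R ⊆ square (-M) (-M + (2 * M + 1 : ℕ)) := fun v hv ↦ by
    have := hM v hv
    simp only [abs_le] at this
    rw [mem_square]
    lia
  have hmeas : MeasurableSet {ω | IsTrifurcation hexGraph (S ω) (R ∩ S ω)} :=
    measurableSet_setOfPred.2 (measurable_isTrifurcation hS fun v ↦ measurable_const.and (hS v))
  rw [ae_iff]
  simp only [not_not]
  refine eq_zero_of_forall_sq_mul_le (a := 8 * (2 * M + 1)) (b := 8) (measure_ne_top μ Set.univ)
    fun n ↦ ?_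
  have := card_mul_measure_le (I := Finset.range n ×ˢ Finset.range n)
    (fun p ↦ hθ (gridPoint (2 * M + 1) p)) hmeas (c := 8 * ((2 * M + 1) * n) + 8) fun ω J hJ hJA ↦
      card_trifurcations_le (S ω) hR hJ fun p hp ↦ by simpa [hSθ] using hJA p hp
  simpa [sq, mul_assoc] using this

end Stationary

/-! ### Cylinder approximation -/

section Cylinders

open scoped symmDiff ENNReal NNReal

variable {ι : Type*} {α : ι → Type*} [∀ i, MeasurableSpace (α i)]

lemma exists_measurableCylinder_measure_symmDiff_lt (μ : Measure (Π i, α i)) [IsFiniteMeasure μ]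
    {A : Set (Π i, α i)} (hA : MeasurableSet A) {ε : ℝ≥0∞} (hε : 0 < ε) :
    ∃ D ∈ measurableCylinders α, μ (D ∆ A) < ε :=
  exists_measure_symmDiff_lt_of_generateFrom_isSetRing isSetRing_measurableCylinders
    ⟨{Set.univ}, Set.countable_singleton _, by simpa using univ_mem_measurableCylinders α, by simp⟩
    generateFrom_measurableCylinders.symm hA hε

lemma le_of_forall_measurableCylinder {ν κ : Measure (Π i, α i)} [IsFiniteMeasure ν]
    [IsFiniteMeasure κ] (h : ∀ D ∈ measurableCylinders α, ν D ≤ κ D) : ν ≤ κ := by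
  refine Measure.le_iff.2 fun A hA ↦ ENNReal.le_of_forall_pos_le_add fun ε hε _ ↦ ?_
  obtain ⟨D, hD, hDA⟩ :=
    exists_measurableCylinder_measure_symmDiff_lt (ν + κ) hA (ENNReal.coe_pos.2 hε)
  have hAD : A ⊆ D ∪ D ∆ A := fun x hx ↦ by
    simp only [Set.mem_union, Set.mem_symmDiff]; tauto
  have hDA' : D ⊆ A ∪ D ∆ A := fun x hx ↦ by
    simp only [Set.mem_union, Set.mem_symmDiff]; tauto
  calc ν A ≤ ν D + ν (D ∆ A) := (measure_mono hAD).trans (measure_union_le _ _)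
    _ ≤ κ D + ν (D ∆ A) := add_le_add (h D hD) le_rfl
    _ ≤ κ A + κ (D ∆ A) + ν (D ∆ A) := by
      gcongr; exact (measure_mono hDA').trans (measure_union_le _ _)
    _ = κ A + (ν + κ) (D ∆ A) := by rw [Measure.add_apply, add_assoc, add_comm (κ (D ∆ A))]
    _ ≤ κ A + ε := by gcongr

lemma le_of_forall_cylinder_singleton_le [∀ i, Finite (α i)] [∀ i, MeasurableSingletonClass (α i)]
    {ν κ : Measure (Π i, α i)} [IsFiniteMeasure ν] [IsFiniteMeasure κ]
    (h : ∀ I : Finset ι, ∃ J, I ⊆ J ∧ ∀ f, ν (cylinder J {f}) ≤ κ (cylinder J {f})) : ν ≤ κ := by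
  refine le_of_forall_measurableCylinder fun D hD ↦ ?_
  obtain ⟨I, T, -, rfl⟩ := (mem_measurableCylinders D).1 hD
  obtain ⟨J, hIJ, hJ⟩ := h I
  let T' : Finset (Π j : J, α j) := (Set.toFinite (Finset.restrict₂ hIJ ⁻¹' T)).toFinset
  have hsum (m : Measure (Π i, α i)) : m (cylinder I T) = ∑ f ∈ T', m (cylinder J {f}) := by
    simp only [cylinder]
    rw [sum_measure_preimage_singleton T' fun f _ ↦
      J.measurable_restrict (MeasurableSet.singleton f), Set.Finite.coe_toFinset]
    rfl
  rw [hsum, hsum]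
  exact Finset.sum_le_sum fun f _ ↦ hJ f

lemma ae_mem_of_mem_of_map_le {X : Type*} [MeasurableSpace X] {μ : Measure X} {Φ : X → X}
    (hΦ : Measurable Φ) {A E : Set X} {k : ℝ≥0} (hle : (μ.restrict A).map Φ ≤ k • μ)
    (hE : MeasurableSet E)
    (happrox : ∀ ε : ℝ≥0∞, 0 < ε → ∃ D, MeasurableSet D ∧ Φ ⁻¹' D = D ∧ μ (D ∆ E) < ε) :
    ∀ᵐ ω ∂μ.restrict A, ω ∈ E → Φ ω ∈ E := by
  suffices hnull : μ.restrict A (E \ Φ ⁻¹' E) = 0 by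
    filter_upwards [measure_eq_zero_iff_ae_notMem.1 hnull] with ω hω hωE
    exact by_contra fun h ↦ hω ⟨hωE, h⟩
  refine nonpos_iff_eq_zero.1 (ENNReal.le_of_forall_pos_le_add fun ε hε _ ↦ ?_)
  obtain ⟨D, hD, hDΦ, hDE⟩ := happrox (ε / (1 + k))
    (ENNReal.div_pos (ENNReal.coe_pos.2 hε).ne' (by finiteness))
  have hcover : E \ Φ ⁻¹' E ⊆ D ∆ E ∪ Φ ⁻¹' (D ∆ E) := by
    rintro ω ⟨hωE, hΦω⟩
    by_cases hωD : ω ∈ D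
    · exact Or.inr (Or.inl ⟨hDΦ.ge hωD, hΦω⟩)
    · exact Or.inl (Or.inr ⟨hωE, hωD⟩)
  calc μ.restrict A (E \ Φ ⁻¹' E)
      ≤ μ.restrict A (D ∆ E) + μ.restrict A (Φ ⁻¹' (D ∆ E)) :=
        (measure_mono hcover).trans (measure_union_le _ _)
    _ ≤ μ (D ∆ E) + k * μ (D ∆ E) := by
      refine add_le_add (Measure.restrict_apply_le A _) ?_
      rw [← Measure.map_apply hΦ (hD.symmDiff hE)]
      exact hle _
    _ = (1 + k) * μ (D ∆ E) := by rw [add_mul, one_mul]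
    _ ≤ (1 + k) * (ε / (1 + k)) := by gcongr
    _ ≤ 0 + ε := by rw [zero_add]; exact ENNReal.mul_div_le

variable {X γ : Type*} [MeasurableSpace X] {μ : Measure (ι → X)} [IsFiniteMeasure μ]

lemma exists_dependsOn_compl_measure_symmDiff_lt {σ : γ → ι → ι}
    (hσ : ∀ g, MeasurePreserving (fun ω : ι → X ↦ ω ∘ σ g) μ μ)
    (hfar : ∀ I F : Finset ι, ∃ g, ∀ i ∈ I, σ g i ∉ F) {E : Set (ι → X)} (hE : MeasurableSet E)
    (hinv : ∀ g, (fun ω : ι → X ↦ ω ∘ σ g) ⁻¹' E = E) (F : Finset ι) {ε : ℝ≥0∞} (hε : 0 < ε) :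
    ∃ D, MeasurableSet D ∧ DependsOn (· ∈ D) (F : Set ι)ᶜ ∧ μ (D ∆ E) < ε := by
  obtain ⟨D, hD, hDE⟩ := exists_measurableCylinder_measure_symmDiff_lt μ hE hε
  obtain ⟨I, T, hT, rfl⟩ := (mem_measurableCylinders D).1 hD
  obtain ⟨g, hg⟩ := hfar I F
  refine ⟨(fun ω ↦ ω ∘ σ g) ⁻¹' cylinder I T, (hσ g).measurable (hT.cylinder I), ?_, ?_⟩
  · intro ω ω' hωω'
    have : I.restrict (ω ∘ σ g) = I.restrict (ω' ∘ σ g) :=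
      funext fun i ↦ hωω' (σ g i) (hg i i.2)
    simp only [Set.mem_preimage, mem_cylinder, this]
  · have hpre : (fun ω ↦ ω ∘ σ g) ⁻¹' (cylinder I T ∆ E) =
        ((fun ω ↦ ω ∘ σ g) ⁻¹' cylinder I T) ∆ E := by
      rw [Set.preimage_symmDiff, hinv]
    rwa [← hpre, (hσ g).measure_preimage ((hT.cylinder I).symmDiff hE).nullMeasurableSet]

end Cylinders

/-! ### Finite energy -/

section FiniteEnergy

open scoped ENNReal NNReal

lemma endpoint_edgesAt (v : HexV) (i : Fin 3) :
    end1 (edgesAt v i) = v ∨ end2 (edgesAt v i) = v := by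
  obtain ⟨x, y, t⟩ := v
  cases t <;> fin_cases i <;> simp [edgesAt, end1, end2]

lemma mem_verts {F : Finset HexE} {v : HexV} :
    v ∈ verts F ↔ ∃ e ∈ F, v = end1 e ∨ v = end2 e := by
  simp [verts, endsFinset]

lemma edgesAt_notMem {F : Finset HexE} {v : HexV} (hv : v ∉ verts F) (i : Fin 3) :
    edgesAt v i ∉ F :=
  fun h ↦ hv (mem_verts.2 ⟨_, h, (endpoint_edgesAt v i).imp Eq.symm Eq.symm⟩)

lemma edgesAt_end1 (e : HexE) : edgesAt (end1 e) e.2.2 = e := by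
  simp [edgesAt, end1]

lemma edgesAt_end2 (e : HexE) : edgesAt (end2 e) e.2.2 = e := by
  obtain ⟨x, y, i⟩ := e
  fin_cases i <;> simp [edgesAt, end2]

lemma finite_edgeNbhd (F : Finset HexE) : (edgeNbhd F).Finite := by
  refine ((verts F).finite_toSet.biUnion fun v _ ↦ Set.finite_range (edgesAt v)).subset ?_
  rintro e' ⟨e, he, h⟩
  have h1 := edgesAt_end1 e'
  have h2 := edgesAt_end2 e'
  simp only [Set.mem_iUnion, Set.mem_range, SetLike.mem_coe, mem_verts]
  rcases h with h | h | h | h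
  · exact ⟨_, ⟨e, he, Or.inl h.symm⟩, _, h1⟩
  · exact ⟨_, ⟨e, he, Or.inl h.symm⟩, _, h2⟩
  · exact ⟨_, ⟨e, he, Or.inr h.symm⟩, _, h1⟩
  · exact ⟨_, ⟨e, he, Or.inr h.symm⟩, _, h2⟩

lemma measurable_localConf (v : HexV) : Measurable fun ω : Config ↦ localConf ω v :=
  measurable_pi_lambda _ fun i ↦ measurable_pi_apply (edgesAt v i)

lemma measurableSet_isConfig : MeasurableSet {ω | IsConfig ω} :=
  measurableSet_setOfPred.2 <| .forall fun v ↦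
    (measurable_of_finite fun f : Fin 3 → Bool ↦
      1 ≤ (Finset.univ.filter fun i ↦ f i = true).card ∧
        (Finset.univ.filter fun i ↦ f i = true).card ≤ 2).comp (measurable_localConf v)

lemma IsGibbs.ae_isConfig {a b c : ℝ} {μ : Measure Config} (hμ : IsGibbs a b c μ) :
    ∀ᵐ ω ∂μ, IsConfig ω :=
  have := hμ.1
  (prob_compl_eq_zero_iff measurableSet_isConfig).2 hμ.2.1

lemma weight_mem_of_isConfig (a b c : ℝ) {ω : Config} (hω : IsConfig ω) (v : HexV) :
    weight a b c (localConf ω v) ∈ ({a, b, c} : Finset ℝ) := by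
  have h := hω v
  generalize localConf ω v = f at h
  have not_constant : ¬ (f 0 = f 1 ∧ f 1 = f 2) := by
    revert f; decide
  unfold weight
  cases h0 : f 0 <;> cases h1 : f 1 <;> cases h2 : f 2 <;> simp_all

variable {a b c : ℝ}

lemma weight_pos (ha : 0 < a) (hb : 0 < b) (hc : 0 < c) {ω : Config} (hω : IsConfig ω) (v : HexV) :
    0 < weight a b c (localConf ω v) := by
  have := weight_mem_of_isConfig a b c hω v
  grind

lemma exists_weight_le_mul (ha : 0 < a) (hb : 0 < b) (hc : 0 < c) :
    ∃ k : ℝ≥0, ∀ σ τ, IsConfig σ → IsConfig τ → ∀ v,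
      weight a b c (localConf σ v) ≤ k * weight a b c (localConf τ v) := by
  let s : Finset ℝ := {a, b, c}
  have hs : ∀ x ∈ s, 0 < x := by grind
  refine ⟨∑ x ∈ s, ∑ y ∈ s, (x / y).toNNReal, fun σ τ hσ hτ v ↦ ?_⟩
  have hσv := weight_mem_of_isConfig a b c hσ v
  have hτv := weight_mem_of_isConfig a b c hτ v
  rw [← div_le_iff₀ (hs _ hτv)]
  refine (Real.le_coe_toNNReal _).trans (NNReal.coe_le_coe.2 ?_)
  exact (Finset.single_le_sum (f := fun y ↦ (weight a b c (localConf σ v) / y).toNNReal)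
    (fun _ _ ↦ zero_le) hτv).trans
      (Finset.single_le_sum (f := fun x ↦ ∑ y ∈ s, (x / y).toNNReal) (fun _ _ ↦ zero_le) hσv)

lemma exists_prod_weight_le_mul (ha : 0 < a) (hb : 0 < b) (hc : 0 < c) (F : Finset HexE) :
    ∃ k : ℝ≥0, ∀ F', F ⊆ F' → ∀ σ τ, IsConfig σ → IsConfig τ → (∀ e ∉ F, σ e = τ e) →
      ∏ v ∈ verts F', weight a b c (localConf σ v) ≤
        k * ∏ v ∈ verts F', weight a b c (localConf τ v) := by
  obtain ⟨k, hk⟩ := exists_weight_le_mul ha hb hc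
  refine ⟨k ^ (verts F).card, fun F' hF σ τ hσ hτ hστ ↦ ?_⟩
  have hverts : verts F ⊆ verts F' := Finset.biUnion_subset_biUnion_of_subset_left _ hF
  have houtside : ∀ v ∈ verts F' \ verts F, localConf σ v = localConf τ v :=
    fun v hv ↦ funext fun i ↦ hστ _ (edgesAt_notMem (Finset.mem_sdiff.1 hv).2 i)
  have hinside : ∏ v ∈ verts F, weight a b c (localConf σ v) ≤
      k ^ (verts F).card * ∏ v ∈ verts F, weight a b c (localConf τ v) := by
    rw [← Finset.prod_const, ← Finset.prod_mul_distrib]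
    exact Finset.prod_le_prod (fun v _ ↦ (weight_pos ha hb hc hσ v).le) fun v _ ↦ hk σ τ hσ hτ v
  rw [← Finset.prod_sdiff hverts, ← Finset.prod_sdiff hverts,
    Finset.prod_congr rfl fun v hv ↦ by rw [houtside v hv], NNReal.coe_pow, mul_left_comm]
  gcongr
  exact Finset.prod_nonneg fun v _ ↦ (weight_pos ha hb hc hτ v).le

lemma IsGibbs.exists_measure_cyl_le_mul {μ : Measure Config} (hμ : IsGibbs a b c μ) (ha : 0 < a)
    (hb : 0 < b) (hc : 0 < c) (F : Finset HexE) :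
    ∃ k : ℝ≥0, ∀ F', F ⊆ F' → ∀ σ τ, IsConfig σ → IsConfig τ → (∀ e ∉ F, σ e = τ e) →
      μ (cyl (↑F' ∪ edgeNbhd F') σ) ≤ k * μ (cyl (↑F' ∪ edgeNbhd F') τ) := by
  obtain ⟨k, hk⟩ := exists_prod_weight_le_mul ha hb hc F
  refine ⟨k, fun F' hF σ τ hσ hτ hστ ↦ ?_⟩
  have hpos : 0 < ∏ v ∈ verts F', weight a b c (localConf τ v) :=
    Finset.prod_pos fun v _ ↦ weight_pos ha hb hc hτ v
  rw [← ENNReal.mul_le_mul_iff_left (ENNReal.ofReal_pos.2 hpos).ne' ENNReal.ofReal_ne_top,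
    hμ.2.2 F' σ τ hσ hτ fun e he ↦ hστ e fun h ↦ he (hF h), mul_right_comm, mul_comm]
  gcongr
  rw [← ENNReal.ofReal_coe_nnreal, ← ENNReal.ofReal_mul k.coe_nonneg]
  exact ENNReal.ofReal_le_ofReal (hk F' hF σ τ hσ hτ hστ)

/-- The configuration `ω` with its values on `F` replaced by those of `ρ`. -/
def overwrite (F : Finset HexE) (ρ ω : Config) : Config := F.piecewise ρ ω

@[simp]
lemma overwrite_of_mem {F : Finset HexE} {e : HexE} (he : e ∈ F) (ρ ω : Config) :
    overwrite F ρ ω e = ρ e :=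
  F.piecewise_eq_of_mem _ _ he

@[simp]
lemma overwrite_of_notMem {F : Finset HexE} {e : HexE} (he : e ∉ F) (ρ ω : Config) :
    overwrite F ρ ω e = ω e :=
  F.piecewise_eq_of_notMem _ _ he

/-- Finite energy: overwriting a configuration by `ρ` on a finite set of edges, wherever this
yields a 1-2 model configuration, maps `μ` to a measure dominated by a multiple of `μ`. -/
def HasFiniteEnergy (μ : Measure Config) : Prop :=
  ∀ (F : Finset HexE) (ρ : Config), ∃ k : ℝ≥0,
    (μ.restrict {ω | IsConfig ω ∧ IsConfig (overwrite F ρ ω)}).map (overwrite F ρ) ≤ k • μ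

lemma measurable_overwrite (F : Finset HexE) (ρ : Config) : Measurable (overwrite F ρ) := by
  refine measurable_pi_lambda _ fun e ↦ ?_
  by_cases he : e ∈ F
  · simp [he]
  · simpa [he] using measurable_pi_apply e

lemma measure_le_card_mul_of_forall_cyl {μ : Measure Config} {F J : Finset HexE} {B : Set Config}
    {m : ℝ≥0∞} (hB : ∀ ω ∈ B, ∀ ω' ∈ B, ∀ e ∈ J \ F, ω e = ω' e) (hm : ∀ ω ∈ B, μ (cyl J ω) ≤ m) :
    μ B ≤ Fintype.card (F → Bool) * m := by
  let piece (η : F → Bool) : Set Config := {ω ∈ B | F.restrict ω = η}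
  have hpiece (η : F → Bool) : μ (piece η) ≤ m := by
    rcases (piece η).eq_empty_or_nonempty with h | ⟨ω, hω, rfl⟩
    · simp [h]
    · refine (measure_mono fun ω' hω' e he ↦ ?_).trans (hm ω hω)
      by_cases heF : e ∈ F
      · exact congrFun hω'.2 ⟨e, heF⟩
      · exact hB ω' hω'.1 ω hω e (Finset.mem_sdiff.2 ⟨he, heF⟩)
  calc μ B ≤ μ (⋃ η, piece η) := measure_mono fun ω hω ↦ Set.mem_iUnion.2 ⟨_, hω, rfl⟩
    _ ≤ ∑ η, μ (piece η) := measure_iUnion_fintype_le _ _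
    _ ≤ Fintype.card (F → Bool) • m := Finset.sum_le_card_nsmul _ _ _ fun η _ ↦ hpiece η
    _ = Fintype.card (F → Bool) * m := nsmul_eq_mul _ _

lemma IsGibbs.hasFiniteEnergy {μ : Measure Config} (hμ : IsGibbs a b c μ) (ha : 0 < a)
    (hb : 0 < b) (hc : 0 < c) : HasFiniteEnergy μ := by
  classical
  intro F ρ
  have := hμ.1
  obtain ⟨k, hk⟩ := hμ.exists_measure_cyl_le_mul ha hb hc F
  refine ⟨Fintype.card (F → Bool) * k, le_of_forall_cylinder_singleton_le fun I ↦ ?_⟩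
  let F' := F ∪ I
  let J : Finset HexE := (F'.finite_toSet.union (finite_edgeNbhd F')).toFinset
  have hJ : (J : Set HexE) = ↑F' ∪ edgeNbhd F' := Set.Finite.coe_toFinset _
  have hIJ : I ⊆ J := fun e he ↦ by
    rw [← SetLike.mem_coe, hJ]; exact Or.inl (by simp [F', he])
  refine ⟨J, hIJ, fun f ↦ ?_⟩
  have hf : MeasurableSet (cylinder (α := fun _ ↦ Bool) J {f}) :=
    (MeasurableSet.singleton f).cylinder J
  rw [Measure.map_apply (measurable_overwrite F ρ) hf,
    Measure.restrict_apply (measurable_overwrite F ρ hf), Measure.smul_apply, ENNReal.smul_def,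
    smul_eq_mul, ENNReal.coe_mul, ENNReal.coe_natCast, mul_assoc]
  refine measure_le_card_mul_of_forall_cyl (F := F) (J := J) ?_ ?_
  · rintro ω ⟨hω, -⟩ ω' ⟨hω', -⟩ e he
    obtain ⟨heJ, heF⟩ := Finset.mem_sdiff.1 he
    have hωω' : J.restrict (overwrite F ρ ω) = J.restrict (overwrite F ρ ω') := hω.trans hω'.symm
    simpa [heF] using congrFun hωω' ⟨e, heJ⟩
  · rintro ω ⟨hω, hω₁, hω₂⟩
    have hcyl : cylinder (α := fun _ ↦ Bool) J {f} = cyl J (overwrite F ρ ω) := by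
      obtain rfl : J.restrict (overwrite F ρ ω) = f := hω
      ext ω'
      simp [cyl, funext_iff, mem_cylinder]
    rw [hcyl, hJ]
    exact hk F' Finset.subset_union_left ω _ hω₁ hω₂ fun e he ↦
      (overwrite_of_notMem he ρ ω).symm

end FiniteEnergy

/-! ### Filling a rectangle with `{001}`-vertices -/

section Filling

/-- The vertices of `ω` whose local configuration is `{001}`. -/
abbrev conf001Set (ω : Config) : Set HexV := confSet ω conf001

lemma mem_conf001Set_iff {ω : Config} {v : HexV} :
    v ∈ conf001Set ω ↔ ∀ i, ω (edgesAt v i) = conf001 i :=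
  funext_iff

lemma isConfig_iff {ω : Config} : IsConfig ω ↔
    ∀ v, (∃ i, ω (edgesAt v i) = true) ∧ ∃ i, ω (edgesAt v i) = false := by
  have key : ∀ f : Fin 3 → Bool, (1 ≤ (Finset.univ.filter fun i ↦ f i = true).card ∧
      (Finset.univ.filter fun i ↦ f i = true).card ≤ 2) ↔
        (∃ i, f i = true) ∧ ∃ i, f i = false := by decide
  exact forall_congr' fun v ↦ key (localConf ω v)

/-- The configuration of all horizontal edges: every vertex has local configuration `{001}`. -/
def horizontal : Config := fun e ↦ conf001 e.2.2

lemma horizontal_edgesAt (v : HexV) (i : Fin 3) : horizontal (edgesAt v i) = conf001 i := by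
  obtain ⟨x, y, t⟩ := v
  cases t <;> fin_cases i <;> rfl

lemma conf001Set_subset_conf001Set_overwrite_horizontal (F : Finset HexE) (ω : Config) :
    conf001Set ω ⊆ conf001Set (overwrite F horizontal ω) := by
  refine fun v hv ↦ mem_conf001Set_iff.2 fun i ↦ ?_
  by_cases he : edgesAt v i ∈ F
  · rw [overwrite_of_mem he, horizontal_edgesAt]
  · rw [overwrite_of_notMem he, mem_conf001Set_iff.1 hv]

/-- The vertices of the cells `(x, y)` with `p ≤ (x, y) ≤ q`. -/
noncomputable def rect (p q : ℤ × ℤ) : Finset HexV :=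
  Finset.Icc p.1 q.1 ×ˢ Finset.Icc p.2 q.2 ×ˢ Finset.univ

/-- The edges with both ends in `rect p q`. -/
noncomputable def rectEdges (p q : ℤ × ℤ) : Finset HexE :=
  (Finset.Icc p.1 q.1 ×ˢ Finset.Icc p.2 q.2 ×ˢ Finset.univ).filter fun e ↦ end2 e ∈ rect p q

/-- `rect p q` without the vertices of its two extremal cells `p` and `q`. -/
noncomputable def truncatedRect (p q : ℤ × ℤ) : Finset HexV :=
  (rect p q).filter fun v ↦ (v.1, v.2.1) ≠ p ∧ (v.1, v.2.1) ≠ q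

/-- The configuration that has exactly the horizontal edges inside `rect p q` and agrees with `ω`
elsewhere. -/
noncomputable def fillRect (p q : ℤ × ℤ) (ω : Config) : Config :=
  overwrite (rectEdges p q) horizontal ω

variable {p q : ℤ × ℤ} {ω : Config}

lemma mem_rect {x y : ℤ} {t : Bool} :
    (x, y, t) ∈ rect p q ↔ (p.1 ≤ x ∧ x ≤ q.1) ∧ p.2 ≤ y ∧ y ≤ q.2 := by
  simp [rect]

lemma mem_truncatedRect {x y : ℤ} {t : Bool} : (x, y, t) ∈ truncatedRect p q ↔
    ((p.1 ≤ x ∧ x ≤ q.1) ∧ p.2 ≤ y ∧ y ≤ q.2) ∧ ¬ (x = p.1 ∧ y = p.2) ∧ ¬ (x = q.1 ∧ y = q.2) := by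
  simp [truncatedRect, mem_rect, Prod.ext_iff]

lemma mem_rectEdges {e : HexE} : e ∈ rectEdges p q ↔ end1 e ∈ rect p q ∧ end2 e ∈ rect p q := by
  simp [rectEdges, rect, end1]

lemma fillRect_edgesAt_of_mem {v : HexV} {i : Fin 3} (h : edgesAt v i ∈ rectEdges p q) :
    fillRect p q ω (edgesAt v i) = conf001 i := by
  rw [fillRect, overwrite_of_mem h, horizontal_edgesAt]

lemma conf001Set_subset_conf001Set_fillRect : conf001Set ω ⊆ conf001Set (fillRect p q ω) :=
  conf001Set_subset_conf001Set_overwrite_horizontal _ ω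

lemma localConf_fillRect_of_notMem {v : HexV} (hv : v ∉ rect p q) :
    localConf (fillRect p q ω) v = localConf ω v := by
  refine funext fun i ↦ overwrite_of_notMem (fun he ↦ hv ?_) _ _
  have := mem_rectEdges.1 he
  rcases endpoint_edgesAt v i with h | h <;> rw [h] at this
  exacts [this.1, this.2]

lemma conf001Set_fillRect_sdiff_rect_subset :
    conf001Set (fillRect p q ω) \ rect p q ⊆ conf001Set ω :=
  fun _ hv ↦ (localConf_fillRect_of_notMem hv.2).symm.trans hv.1

lemma mem_conf001Set_fillRect_true {x y : ℤ} (hx : p.1 ≤ x ∧ x < q.1) (hy : p.2 ≤ y ∧ y < q.2) :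
    (x, y, true) ∈ conf001Set (fillRect p q ω) := by
  refine mem_conf001Set_iff.2 fun i ↦ fillRect_edgesAt_of_mem (mem_rectEdges.2 ?_)
  fin_cases i <;> grind [edgesAt, end1, end2, mem_rect]

lemma mem_conf001Set_fillRect_false {x y : ℤ} (hx : p.1 < x ∧ x ≤ q.1) (hy : p.2 < y ∧ y ≤ q.2) :
    (x, y, false) ∈ conf001Set (fillRect p q ω) := by
  refine mem_conf001Set_iff.2 fun i ↦ fillRect_edgesAt_of_mem (mem_rectEdges.2 ?_)
  fin_cases i <;> grind [edgesAt, end1, end2, mem_rect]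

lemma edgesAt_zero_mem_rectEdges {v : HexV} (hv : v ∈ rect p q) :
    edgesAt v 0 ∈ rectEdges p q := by
  obtain ⟨x, y, t⟩ := v
  cases t <;> simpa [edgesAt, end1, end2, mem_rectEdges, mem_rect] using hv

lemma edgesAt_one_or_two_mem_rectEdges {v : HexV} (hv : v ∈ rect p q)
    (hp : v ≠ (p.1, p.2, false)) (hq : v ≠ (q.1, q.2, true)) :
    edgesAt v 1 ∈ rectEdges p q ∨ edgesAt v 2 ∈ rectEdges p q := by
  obtain ⟨x, y, t⟩ := v
  rw [mem_rect] at hv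
  cases t <;> grind [edgesAt, end1, end2, mem_rectEdges, mem_rect]

lemma isConfig_fillRect (hω : IsConfig ω) (hp : (p.1, p.2, false) ∈ conf001Set ω)
    (hq : (q.1, q.2, true) ∈ conf001Set ω) : IsConfig (fillRect p q ω) := by
  refine isConfig_iff.2 fun v ↦ ?_
  by_cases hv : v ∈ rect p q
  · have hfalse (h : v ∈ conf001Set ω) : fillRect p q ω (edgesAt v 1) = false :=
      mem_conf001Set_iff.1 (conf001Set_subset_conf001Set_fillRect h) 1
    refine ⟨⟨0, fillRect_edgesAt_of_mem (edgesAt_zero_mem_rectEdges hv)⟩, ?_⟩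
    by_cases hvp : v = (p.1, p.2, false)
    · exact ⟨1, hfalse (hvp ▸ hp)⟩
    by_cases hvq : v = (q.1, q.2, true)
    · exact ⟨1, hfalse (hvq ▸ hq)⟩
    rcases edgesAt_one_or_two_mem_rectEdges hv hvp hvq with h | h
    exacts [⟨1, fillRect_edgesAt_of_mem h⟩, ⟨2, fillRect_edgesAt_of_mem h⟩]
  · have hconf (i : Fin 3) : fillRect p q ω (edgesAt v i) = ω (edgesAt v i) :=
      congrFun (localConf_fillRect_of_notMem hv) i
    simpa only [hconf] using isConfig_iff.1 hω v

/-- The `{001}`-vertices of `fillRect p q ω` inside `truncatedRect p q`. -/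
abbrev filling (p q : ℤ × ℤ) (ω : Config) : Set HexV :=
  truncatedRect p q ∩ conf001Set (fillRect p q ω)

lemma true_mem_filling {x y : ℤ} (hx : p.1 ≤ x ∧ x < q.1) (hy : p.2 ≤ y ∧ y < q.2)
    (hp : ¬ (x = p.1 ∧ y = p.2)) : (x, y, true) ∈ filling p q ω :=
  ⟨mem_truncatedRect.2 (by lia), mem_conf001Set_fillRect_true hx hy⟩

lemma false_mem_filling {x y : ℤ} (hx : p.1 < x ∧ x ≤ q.1) (hy : p.2 < y ∧ y ≤ q.2)
    (hq : ¬ (x = q.1 ∧ y = q.2)) : (x, y, false) ∈ filling p q ω :=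
  ⟨mem_truncatedRect.2 (by lia), mem_conf001Set_fillRect_false hx hy⟩

lemma reachableIn_filling_of_false (hpq₁ : p.1 + 2 ≤ q.1) (hpq₂ : p.2 + 2 ≤ q.2) {x y : ℤ}
    (hx : p.1 < x ∧ x ≤ q.1) (hy : p.2 < y ∧ y ≤ q.2) (hq : ¬ (x = q.1 ∧ y = q.2)) :
    ReachableIn hexGraph (filling p q ω) (x, y, false) (p.1 + 1, p.2 + 1, false) := by
  induction hn : (x - p.1 + (y - p.2)).toNat using Nat.strong_induction_on generalizing x y with
  | _ n ih =>
  have via {x₁ y₁ x₂ y₂ : ℤ} (ht : (x₁, y₁, true) ∈ filling p q ω)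
      (h₁ : hexGraph.Adj (x, y, false) (x₁, y₁, true))
      (h₂ : hexGraph.Adj (x₁, y₁, true) (x₂, y₂, false))
      (hx₂ : p.1 < x₂ ∧ x₂ ≤ q.1) (hy₂ : p.2 < y₂ ∧ y₂ ≤ q.2) (hlt : x₂ + y₂ < x + y) :
      ReachableIn hexGraph (filling p q ω) (x, y, false) (p.1 + 1, p.2 + 1, false) :=
    have hq₂ : ¬ (x₂ = q.1 ∧ y₂ = q.2) := by lia
    (ReachableIn.of_adj h₁ (false_mem_filling hx hy hq) ht).trans <|
      (ReachableIn.of_adj h₂ ht (false_mem_filling hx₂ hy₂ hq₂)).trans <|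
        ih _ (by lia) hx₂ hy₂ hq₂ rfl
  by_cases hleft : p.1 + 1 < x ∧ y < q.2
  · exact via (x₁ := x - 1) (y₁ := y) (x₂ := x - 1) (y₂ := y)
      (true_mem_filling (by lia) (by lia) (by lia)) (by simp [hexGraph_adj_iff])
      (by simp [hexGraph_adj_iff]) (by lia) (by lia) (by lia)
  by_cases hdown : p.2 + 1 < y ∧ x < q.1
  · exact via (x₁ := x) (y₁ := y - 1) (x₂ := x) (y₂ := y - 1)
      (true_mem_filling (by lia) (by lia) (by lia)) (by simp [hexGraph_adj_iff])
      (by simp [hexGraph_adj_iff]) (by lia) (by lia) (by lia)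
  obtain ⟨rfl, rfl⟩ : x = p.1 + 1 ∧ y = p.2 + 1 := by lia
  exact .refl _

lemma reachableIn_filling_of_true (hpq₁ : p.1 + 2 ≤ q.1) (hpq₂ : p.2 + 2 ≤ q.2) {x y : ℤ}
    (h : (x, y, true) ∈ filling p q ω) :
    ReachableIn hexGraph (filling p q ω) (x, y, true) (p.1 + 1, p.2 + 1, false) := by
  have hmem := mem_truncatedRect.1 h.1
  obtain ⟨x', y', hadj, hx', hy', hq'⟩ : ∃ x' y', hexGraph.Adj (x, y, true) (x', y', false) ∧
      (p.1 < x' ∧ x' ≤ q.1) ∧ (p.2 < y' ∧ y' ≤ q.2) ∧ ¬ (x' = q.1 ∧ y' = q.2) := by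
    by_cases hx : x = p.1
    · exact ⟨x + 1, y, by simp [hexGraph_adj_iff], by lia⟩
    by_cases hy : y = p.2
    · exact ⟨x, y + 1, by simp [hexGraph_adj_iff], by lia⟩
    exact ⟨x, y, by simp [hexGraph_adj_iff], by lia⟩
  exact (ReachableIn.of_adj hadj h (false_mem_filling hx' hy' hq')).trans
    (reachableIn_filling_of_false hpq₁ hpq₂ hx' hy' hq')

lemma reachableIn_filling_base (hpq₁ : p.1 + 2 ≤ q.1) (hpq₂ : p.2 + 2 ≤ q.2) {v : HexV}
    (h : v ∈ filling p q ω) :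
    ReachableIn hexGraph (filling p q ω) v (p.1 + 1, p.2 + 1, false) := by
  obtain ⟨x, y, _ | _⟩ := v
  · have hmem := mem_truncatedRect.1 h.1
    obtain ⟨x', y', hadj, hx', hy', hp'⟩ : ∃ x' y', hexGraph.Adj (x, y, false) (x', y', true) ∧
        (p.1 ≤ x' ∧ x' < q.1) ∧ (p.2 ≤ y' ∧ y' < q.2) ∧ ¬ (x' = p.1 ∧ y' = p.2) := by
      by_cases hx : x = q.1
      · exact ⟨x - 1, y, by simp [hexGraph_adj_iff], by lia⟩
      by_cases hy : y = q.2
      · exact ⟨x, y - 1, by simp [hexGraph_adj_iff], by lia⟩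
      exact ⟨x, y, by simp [hexGraph_adj_iff], by lia⟩
    have ht : (x', y', true) ∈ filling p q ω := true_mem_filling hx' hy' hp'
    exact (ReachableIn.of_adj hadj h ht).trans (reachableIn_filling_of_true hpq₁ hpq₂ ht)
  · exact reachableIn_filling_of_true hpq₁ hpq₂ h

lemma reachableIn_filling (hpq₁ : p.1 + 2 ≤ q.1) (hpq₂ : p.2 + 2 ≤ q.2) {u v : HexV}
    (hu : u ∈ filling p q ω) (hv : v ∈ filling p q ω) :
    ReachableIn hexGraph (filling p q ω) u v :=
  (reachableIn_filling_base hpq₁ hpq₂ hu).trans (reachableIn_filling_base hpq₁ hpq₂ hv).symm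

lemma sdiff_filling_subset :
    conf001Set ω \ filling p q ω ⊆ conf001Set (fillRect p q ω) \ filling p q ω :=
  Set.sdiff_subset_sdiff_left conf001Set_subset_conf001Set_fillRect

-- Such a `t` lies in the cell `p` or `q`, and `u = v` is the other vertex of that cell.
lemma eq_of_adj_of_notMem_truncatedRect (hpq₁ : p.1 < q.1) (hpq₂ : p.2 < q.2) {t u v : HexV}
    (htrect : t ∈ rect p q) (ht : t ∉ truncatedRect p q) (htp : t ≠ (p.1, p.2, false))
    (htq : t ≠ (q.1, q.2, true)) (hu : u ∉ truncatedRect p q) (hv : v ∉ truncatedRect p q)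
    (htu : hexGraph.Adj t u) (htv : hexGraph.Adj t v) : u = v := by
  obtain ⟨x, y, t⟩ := t
  obtain ⟨x₁, y₁, t₁⟩ := u
  obtain ⟨x₂, y₂, t₂⟩ := v
  rw [mem_truncatedRect] at ht hu hv
  rw [mem_rect] at htrect
  rw [hexGraph_adj_iff] at htu htv
  simp only [ne_eq, Prod.mk.injEq] at htp htq ⊢
  cases t <;> cases t₁ <;> cases t₂ <;> grind

lemma eq_of_adj_of_mem_conf001Set_fillRect (hpq₁ : p.1 < q.1) (hpq₂ : p.2 < q.2)
    (hp : (p.1, p.2, false) ∈ conf001Set ω) (hq : (q.1, q.2, true) ∈ conf001Set ω) {t u v : HexV}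
    (ht : t ∈ (conf001Set (fillRect p q ω) \ filling p q ω) \ (conf001Set ω \ filling p q ω))
    (hu : u ∈ conf001Set (fillRect p q ω) \ filling p q ω)
    (hv : v ∈ conf001Set (fillRect p q ω) \ filling p q ω)
    (htu : hexGraph.Adj t u) (htv : hexGraph.Adj t v) : u = v := by
  have hout {w : HexV} (hw : w ∈ conf001Set (fillRect p q ω) \ filling p q ω) :
      w ∉ truncatedRect p q := fun h ↦ hw.2 ⟨h, hw.1⟩
  have htω : t ∉ conf001Set ω := fun h ↦ ht.2 ⟨h, ht.1.2⟩
  have htrect : t ∈ rect p q := by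
    by_contra h
    exact htω (conf001Set_fillRect_sdiff_rect_subset ⟨ht.1.1, h⟩)
  exact eq_of_adj_of_notMem_truncatedRect hpq₁ hpq₂ htrect (hout ht.1) (fun h ↦ htω (h ▸ hp))
    (fun h ↦ htω (h ▸ hq)) (hout hu) (hout hv) htu htv

lemma isTrifurcation_fillRect (hpq₁ : p.1 + 2 ≤ q.1) (hpq₂ : p.2 + 2 ≤ q.2)
    (hp : (p.1, p.2, false) ∈ conf001Set ω) (hq : (q.1, q.2, true) ∈ conf001Set ω)
    {v : Fin 3 → HexV} (hv : ∀ i, v i ∈ truncatedRect p q)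
    (hinf : ∀ i, (componentIn hexGraph (conf001Set ω) (v i)).Infinite)
    (hsep : Pairwise fun i j ↦ ¬ ReachableIn hexGraph (conf001Set ω) (v i) (v j)) :
    IsTrifurcation hexGraph (conf001Set (fillRect p q ω)) (filling p q ω) := by
  have hfilling (i) : v i ∈ filling p q ω :=
    ⟨hv i, conf001Set_subset_conf001Set_fillRect (mem_of_infinite_componentIn (hinf i))⟩
  choose z hadj hreach hbranch using fun i ↦
    exists_infinite_branch ((truncatedRect p q).finite_toSet.inter_of_left _) (hfilling i) (hinf i)
  refine ⟨Set.inter_subset_right, fun _ hu _ hw ↦ reachableIn_filling hpq₁ hpq₂ hu hw, z,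
    fun i ↦ ⟨hadj i, infinite_componentIn_mono sdiff_filling_subset (hbranch i)⟩,
    fun i j hij h ↦ hsep hij ?_⟩
  have hz : ReachableIn hexGraph (conf001Set ω \ filling p q ω) (z i) (z j) :=
    h.of_pendant sdiff_filling_subset
      (fun _ ht _ ha _ hb ↦ eq_of_adj_of_mem_conf001Set_fillRect (by lia) (by lia) hp hq ht ha hb)
      (mem_of_infinite_componentIn (hbranch i)) (mem_of_infinite_componentIn (hbranch j))
  exact (hreach i).trans ((hz.mono Set.sdiff_subset).trans (hreach j).symm)

lemma exists_reachableIn_conf001Set_fillRect {n : ℕ} {v : Fin n → HexV}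
    (hinf : ∀ i, (componentIn hexGraph (conf001Set ω) (v i)).Infinite)
    (hsep : Pairwise fun i j ↦ ¬ ReachableIn hexGraph (conf001Set ω) (v i) (v j))
    (hmax : ¬ HasInfiniteComponents hexGraph (conf001Set ω) (n + 1)) {u : HexV}
    (hu : (componentIn hexGraph (conf001Set (fillRect p q ω)) u).Infinite) :
    ∃ i, ReachableIn hexGraph (conf001Set (fillRect p q ω)) (v i) u := by
  obtain ⟨z, -, huz, hz⟩ := exists_infinite_branch
    ((rect p q).finite_toSet.insert u) (Set.mem_insert u _) hu
  have hsub : conf001Set (fillRect p q ω) \ insert u (rect p q) ⊆ conf001Set ω :=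
    (Set.sdiff_subset_sdiff_right (Set.subset_insert _ _)).trans
      conf001Set_fillRect_sdiff_rect_subset
  obtain ⟨i, hi⟩ := exists_reachableIn_of_not_hasInfiniteComponents hmax hinf hsep
    (infinite_componentIn_mono hsub hz)
  exact ⟨i, (hi.mono conf001Set_subset_conf001Set_fillRect).trans huz.symm⟩

lemma not_hasInfiniteComponents_two_fillRect (hpq₁ : p.1 + 2 ≤ q.1) (hpq₂ : p.2 + 2 ≤ q.2)
    {n : ℕ} {v : Fin n → HexV} (hv : ∀ i, v i ∈ truncatedRect p q)
    (hinf : ∀ i, (componentIn hexGraph (conf001Set ω) (v i)).Infinite)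
    (hsep : Pairwise fun i j ↦ ¬ ReachableIn hexGraph (conf001Set ω) (v i) (v j))
    (hmax : ¬ HasInfiniteComponents hexGraph (conf001Set ω) (n + 1)) :
    ¬ HasInfiniteComponents hexGraph (conf001Set (fillRect p q ω)) 2 := by
  rintro ⟨u, hu, husep⟩
  have hfilling (i) : v i ∈ filling p q ω :=
    ⟨hv i, conf001Set_subset_conf001Set_fillRect (mem_of_infinite_componentIn (hinf i))⟩
  obtain ⟨i, hi⟩ := exists_reachableIn_conf001Set_fillRect hinf hsep hmax (hu 0)
  obtain ⟨j, hj⟩ := exists_reachableIn_conf001Set_fillRect hinf hsep hmax (hu 1)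
  exact husep zero_ne_one <| hi.symm.trans <|
    ((reachableIn_filling hpq₁ hpq₂ (hfilling i) (hfilling j)).mono Set.inter_subset_right).trans hj

end Filling

/-! ### Translation-invariant measures with finite energy -/

section TransInvariant

variable {μ : Measure Config}

lemma TransInvariant.measurePreserving (hμ : TransInvariant μ) (g : ℤ × ℤ) :
    MeasurePreserving (shiftConfig g) μ μ :=
  ⟨measurable_pi_lambda _ fun e ↦ measurable_pi_apply (shiftE g e), hμ g⟩

lemma edgesAt_hexTranslate (g : ℤ × ℤ) (v : HexV) (i : Fin 3) :
    edgesAt (hexTranslate g v) i = shiftE g (edgesAt v i) := by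
  obtain ⟨x, y, t⟩ := v
  cases t <;> fin_cases i <;> grind [edgesAt, shiftE, hexTranslate_apply]

lemma conf001Set_shiftConfig (g : ℤ × ℤ) (ω : Config) :
    conf001Set (shiftConfig g ω) = hexTranslate g ⁻¹' conf001Set ω := by
  ext v
  simp only [Set.mem_preimage, mem_conf001Set_iff, edgesAt_hexTranslate, shiftConfig]

lemma iterate_shiftConfig (g : ℤ × ℤ) (n : ℕ) (ω : Config) :
    (shiftConfig g)^[n] ω = shiftConfig (n • g) ω := by
  induction n with
  | zero => simp [funext_iff, shiftConfig, shiftE]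
  | succ n ih =>
    rw [Function.iterate_succ_apply', ih]
    simp only [funext_iff, shiftConfig, shiftE, succ_nsmul', Prod.fst_add, Prod.snd_add,
      add_assoc, implies_true]

lemma measurable_mem_conf001Set (v : HexV) : Measurable fun ω ↦ v ∈ conf001Set ω :=
  (measurable_of_finite fun f ↦ f = conf001).comp (measurable_localConf v)

lemma measurableSet_hasInfiniteComponents_conf001Set (n : ℕ) :
    MeasurableSet {ω | HasInfiniteComponents hexGraph (conf001Set ω) n} :=
  measurableSet_setOfPred.2 (measurable_hasInfiniteComponents measurable_mem_conf001Set n)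

lemma preimage_shiftConfig_hasInfiniteComponents_conf001Set (g : ℤ × ℤ) (n : ℕ) :
    shiftConfig g ⁻¹' {ω | HasInfiniteComponents hexGraph (conf001Set ω) n} =
      {ω | HasInfiniteComponents hexGraph (conf001Set ω) n} := by
  ext ω
  simp only [Set.mem_preimage, Set.mem_ofPred_eq, conf001Set_shiftConfig,
    hasInfiniteComponents_preimage_iff]

lemma exists_forall_shiftE_notMem (I F : Finset HexE) : ∃ g, ∀ e ∈ I, shiftE g e ∉ F := by
  obtain ⟨M, hM⟩ := exists_forall_abs_le (I ∪ F)
  refine ⟨(2 * M + 1, 0), fun e he heF ↦ ?_⟩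
  have h₁ := (hM e (Finset.mem_union_left F he)).1
  have h₂ := (hM _ (Finset.mem_union_right I heF)).1
  simp only [shiftE, abs_le] at h₁ h₂
  lia

lemma measurableSet_isConfig_and_isConfig_overwrite (F : Finset HexE) (ρ : Config) :
    MeasurableSet {ω | IsConfig ω ∧ IsConfig (overwrite F ρ ω)} :=
  measurableSet_isConfig.inter (measurableSet_isConfig.preimage (measurable_overwrite F ρ))

lemma HasFiniteEnergy.ae_of_ae (hμ : HasFiniteEnergy μ) {P : Config → Prop}
    (hP : ∀ᵐ ω ∂μ, P ω) (F : Finset HexE) (ρ : Config) :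
    ∀ᵐ ω ∂μ, IsConfig ω → IsConfig (overwrite F ρ ω) → P (overwrite F ρ ω) := by
  obtain ⟨k, hk⟩ := hμ F ρ
  have hmap := ae_of_ae_map (measurable_overwrite F ρ).aemeasurable
    ((Measure.absolutelyContinuous_of_le_smul hk).ae_le hP)
  rw [ae_restrict_iff' (measurableSet_isConfig_and_isConfig_overwrite F ρ)] at hmap
  filter_upwards [hmap] with ω h h₁ h₂ using h ⟨h₁, h₂⟩

-- Up to a small error, invariant events do not depend on the edges in `F`.
lemma HasFiniteEnergy.ae_overwrite_mem [IsFiniteMeasure μ] (hμ : HasFiniteEnergy μ)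
    (hTI : TransInvariant μ) {E : Set Config} (hE : MeasurableSet E)
    (hinv : ∀ g, shiftConfig g ⁻¹' E = E) (F : Finset HexE) (ρ : Config) :
    ∀ᵐ ω ∂μ, IsConfig ω → IsConfig (overwrite F ρ ω) → ω ∈ E → overwrite F ρ ω ∈ E := by
  obtain ⟨k, hk⟩ := hμ F ρ
  have h := ae_mem_of_mem_of_map_le (measurable_overwrite F ρ) hk hE fun ε hε ↦ by
    obtain ⟨D, hD, hDF, hDE⟩ := exists_dependsOn_compl_measure_symmDiff_lt (σ := shiftE)
      hTI.measurePreserving exists_forall_shiftE_notMem hE hinv F hε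
    exact ⟨D, hD, Set.ext fun ω ↦
      iff_of_eq (hDF fun e he ↦ overwrite_of_notMem (by simpa using he) ρ ω), hDE⟩
  rw [ae_restrict_iff' (measurableSet_isConfig_and_isConfig_overwrite F ρ)] at h
  filter_upwards [h] with ω h h₁ h₂ using h ⟨h₁, h₂⟩

lemma TransInvariant.ae_frequently_mem_conf001Set [IsFiniteMeasure μ] (hTI : TransInvariant μ) :
    ∀ᵐ ω ∂μ, ∀ g, ∀ v ∈ conf001Set ω,
      ∃ᶠ n : ℕ in Filter.atTop, hexTranslate (n • g) v ∈ conf001Set ω := by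
  refine ae_all_iff.2 fun g ↦ ae_all_iff.2 fun v ↦ ?_
  filter_upwards [(hTI.measurePreserving g).conservative.ae_mem_imp_frequently_image_mem
    (measurableSet_setOfPred.2 (measurable_mem_conf001Set v)).nullMeasurableSet] with ω hω hv
  simpa only [Set.mem_ofPred_eq, iterate_shiftConfig, conf001Set_shiftConfig,
    Set.mem_preimage] using hω hv

lemma exists_mem_of_infinite_componentIn {S : Set HexV} {v : HexV}
    (h : (componentIn hexGraph S v).Infinite) (t : Bool) : ∃ x y, (x, y, t) ∈ S := by
  obtain ⟨w, ⟨u, rfl, huw⟩, hreach, -⟩ :=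
    exists_infinite_branch (Set.finite_singleton v) (Set.mem_singleton v) h
  have hu := mem_of_infinite_componentIn h
  have hw := hreach.mem hu
  obtain ⟨x, y, s⟩ := u
  obtain ⟨x', y', s'⟩ := w
  have hs : t = s ∨ t = s' := by
    rw [hexGraph_adj_iff] at huw
    grind
  rcases hs with rfl | rfl
  exacts [⟨x, y, hu⟩, ⟨x', y', hw⟩]

lemma exists_subset_truncatedRect {ω : Config}
    (hrec : ∀ g, ∀ v ∈ conf001Set ω,
      ∃ᶠ n : ℕ in Filter.atTop, hexTranslate (n • g) v ∈ conf001Set ω)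
    {v : HexV} (hv : (componentIn hexGraph (conf001Set ω) v).Infinite) (W : Finset HexV) :
    ∃ p q : ℤ × ℤ, p.1 + 2 ≤ q.1 ∧ p.2 + 2 ≤ q.2 ∧ (p.1, p.2, false) ∈ conf001Set ω ∧
      (q.1, q.2, true) ∈ conf001Set ω ∧ W ⊆ truncatedRect p q := by
  obtain ⟨M, hM⟩ := exists_forall_abs_le W
  obtain ⟨x, y, hxy⟩ := exists_mem_of_infinite_componentIn hv false
  obtain ⟨x', y', hxy'⟩ := exists_mem_of_infinite_componentIn hv true
  obtain ⟨m, hm, hp⟩ :=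
    (hrec (-1, -1) _ hxy).forall_exists_of_atTop (M + x.natAbs + y.natAbs + 1)
  obtain ⟨n, hn, hq⟩ :=
    (hrec (1, 1) _ hxy').forall_exists_of_atTop (M + x'.natAbs + y'.natAbs + 1)
  refine ⟨(x, y) + m • (-1, -1), (x', y') + n • (1, 1), ?_, ?_, hp, hq, fun ⟨a, b, t⟩ hw ↦ ?_⟩
  · simp only [Prod.smul_mk, Int.nsmul_eq_mul, Prod.mk_add_mk]; lia
  · simp only [Prod.smul_mk, Int.nsmul_eq_mul, Prod.mk_add_mk]; lia
  · have := hM _ hw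
    simp only [abs_le] at this
    simp only [mem_truncatedRect, Prod.smul_mk, Int.nsmul_eq_mul, Prod.mk_add_mk]
    lia

variable [IsFiniteMeasure μ]

lemma ae_not_hasInfiniteComponents_three (hconf : ∀ᵐ ω ∂μ, IsConfig ω) (hfe : HasFiniteEnergy μ)
    (hTI : TransInvariant μ) : ∀ᵐ ω ∂μ, ¬ HasInfiniteComponents hexGraph (conf001Set ω) 3 := by
  have hfill (p q : ℤ × ℤ) : ∀ᵐ ω ∂μ, IsConfig ω → IsConfig (fillRect p q ω) →
      ¬ IsTrifurcation hexGraph (conf001Set (fillRect p q ω)) (filling p q ω) :=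
    hfe.ae_of_ae (ae_not_isTrifurcation hTI.measurePreserving measurable_mem_conf001Set
      conf001Set_shiftConfig (truncatedRect p q)) _ _
  filter_upwards [hconf, hTI.ae_frequently_mem_conf001Set,
    ae_all_iff.2 fun p ↦ ae_all_iff.2 fun q ↦ hfill p q] with ω hω hrec hfill
  rintro ⟨v, hinf, hsep⟩
  obtain ⟨p, q, hpq₁, hpq₂, hp, hq, hv⟩ :=
    exists_subset_truncatedRect hrec (hinf 0) (Finset.univ.image v)
  exact hfill p q hω (isConfig_fillRect hω hp hq) <| isTrifurcation_fillRect hpq₁ hpq₂ hp hq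
    (fun i ↦ hv (Finset.mem_image_of_mem v (Finset.mem_univ i))) hinf hsep

lemma ae_not_hasInfiniteComponents_two (hconf : ∀ᵐ ω ∂μ, IsConfig ω) (hfe : HasFiniteEnergy μ)
    (hTI : TransInvariant μ) : ∀ᵐ ω ∂μ, ¬ HasInfiniteComponents hexGraph (conf001Set ω) 2 := by
  have hfill (p q : ℤ × ℤ) : ∀ᵐ ω ∂μ, IsConfig ω → IsConfig (fillRect p q ω) →
      HasInfiniteComponents hexGraph (conf001Set ω) 2 →
        HasInfiniteComponents hexGraph (conf001Set (fillRect p q ω)) 2 :=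
    hfe.ae_overwrite_mem hTI (measurableSet_hasInfiniteComponents_conf001Set 2)
      (preimage_shiftConfig_hasInfiniteComponents_conf001Set · 2) _ _
  filter_upwards [hconf, hTI.ae_frequently_mem_conf001Set,
    ae_not_hasInfiniteComponents_three hconf hfe hTI,
    ae_all_iff.2 fun p ↦ ae_all_iff.2 fun q ↦ hfill p q] with ω hω hrec hthree hfill htwo
  obtain ⟨v, hinf, hsep⟩ := id htwo
  obtain ⟨p, q, hpq₁, hpq₂, hp, hq, hv⟩ :=
    exists_subset_truncatedRect hrec (hinf 0) (Finset.univ.image v)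
  exact not_hasInfiniteComponents_two_fillRect hpq₁ hpq₂
    (fun i ↦ hv (Finset.mem_image_of_mem v (Finset.mem_univ i))) hinf hsep hthree
    (hfill p q hω (isConfig_fillRect hω hp hq) htwo)

lemma numInfClusters_le_one {ω : Config} (h : ¬ HasInfiniteComponents hexGraph (conf001Set ω) 2) :
    numInfClusters ω conf001 ≤ 1 := by
  refine Set.encard_le_one_iff.2 ?_
  rintro _ _ ⟨⟨u, -, rfl⟩, hu⟩ ⟨⟨v, -, rfl⟩, hv⟩
  simp only [compOf_eq_componentIn] at hu hv ⊢
  have huv : ReachableIn hexGraph (conf001Set ω) u v := by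
    by_contra huv
    exact h ⟨![u, v], by simpa [Fin.forall_fin_two] using ⟨hu, hv⟩,
      by simpa [Pairwise, Fin.forall_fin_two] using ⟨huv, fun h ↦ huv h.symm⟩⟩
  exact Set.ext fun w ↦ ⟨huv.symm.trans, huv.trans⟩

theorem at_most_one_infinite_001_cluster_general (hconf : ∀ᵐ ω ∂μ, IsConfig ω)
    (hfe : HasFiniteEnergy μ) (hTI : TransInvariant μ) :
    ∀ᵐ ω ∂μ, numInfClusters ω conf001 ≤ 1 :=
  (ae_not_hasInfiniteComponents_two hconf hfe hTI).mono fun _ ↦ numInfClusters_le_one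

end TransInvariant

/-- For any translation-invariant Gibbs measure `μ` for the 1-2 model (with any
weights `a, b, c > 0`), `μ`-almost every 1-2 model configuration has at most one infinite
`{001}`-cluster. -/
theorem at_most_one_infinite_001_cluster
    (a b c : ℝ) (ha : 0 < a) (hb : 0 < b) (hc : 0 < c)
    (μ : Measure Config) (hGibbs : IsGibbs a b c μ) (hTI : TransInvariant μ) :
    μ {ω : Config | IsConfig ω ∧ numInfClusters ω conf001 ≤ 1} = 1 := by
  have := hGibbs.1
  have h := hGibbs.ae_isConfig.and <| at_most_one_infinite_001_cluster_general
    hGibbs.ae_isConfig (hGibbs.hasFiniteEnergy ha hb hc) hTI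
  exact (measure_congr (Filter.eventuallyEq_univ.2 h)).trans measure_univ
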